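/- arXiv:2411.17678 — 5 statements merged into one kernel-verified Lean document; each statement's English description precedes it below -/
import Mathlib

section
/- Let Ω ⊂ ℝ^m be the standard simplex, i.e. the convex hull of {e_0, e_1, …, e_m} where e_0 = 0 and e_1, …, e_m is the standard basis, and for i ∈ {0,1,…,m} let F_i be the relative interior of the facet of Ω opposite to e_i (the set of points expressible as convex combinations ∑_j λ_j e_j with λ_i = 0 and λ_j > 0 for every j ≠ i). Then there exist a Lipschitz function f : Ω → ℝ, an open neighborhood V of ⋃_i F_i, and a constant C depending only on m such that: (a) f is positive and smooth (C^∞) on the interior of Ω; (b) f(x) = dist(x, ∂Ω) for every x ∈ V ∩ Ω; (c) f is Lipschitz on Ω with Lipschitz constant at most C. -/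
open Set Metric

/-- The vertices `e₀ = 0, e₁, …, e_m` of the standard simplex in `ℝ^m`. -/
noncomputable def stdVertex (m : ℕ) : Fin (m + 1) → EuclideanSpace ℝ (Fin m) :=
  fun i => Fin.cases 0 (fun j => EuclideanSpace.single j 1) i

/-- The standard simplex `Ω ⊂ ℝ^m`, the convex hull of `{e₀, e₁, …, e_m}`. -/
noncomputable def stdSimplexSet (m : ℕ) : Set (EuclideanSpace ℝ (Fin m)) :=
  convexHull ℝ (Set.range (stdVertex m))

/-- `F i`, the relative interior of the facet of `Ω` opposite to the vertex `e_i`: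
points which are convex combinations `∑ λ_j e_j` with `λ_i = 0` and `λ_j > 0` for `j ≠ i`. -/
def openFacet (m : ℕ) (i : Fin (m + 1)) : Set (EuclideanSpace ℝ (Fin m)) :=
  {p | ∃ lam : Fin (m + 1) → ℝ, (∑ j, lam j) = 1 ∧ lam i = 0 ∧
    (∀ j, j ≠ i → 0 < lam j) ∧ (∑ j, lam j • stdVertex m j) = p}

/-!
The distance from a point of a polyhedron to its boundary is the minimum of its distances `dᵢ` to
the facets. Replacing this minimum by an iterate of a binary smooth minimum, which is homogeneous of
degree one and returns its smaller argument as soon as the other one is at least twice as large,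
gives a function that is positive and smooth where all `dᵢ` are positive, and that agrees with `dᵢ`
near the relative interior of the `i`-th facet, where `dᵢ` is much smaller than all the other
distances. Homogeneity reduces the Lipschitz bound for the binary minimum to a one-variable slice,
which is affine outside a compact interval.
-/

open scoped ContDiff NNReal

section BinarySmoothMin

theorem smoothTransition_one_sub (x : ℝ) :
    Real.smoothTransition (1 - x) = 1 - Real.smoothTransition x := by
  have hx := (Real.smoothTransition.pos_denom x).ne'
  rw [Real.smoothTransition, Real.smoothTransition, sub_sub_cancel,
    add_comm (expNegInvGlue (1 - x)), eq_sub_iff_add_eq, ← add_div, add_comm, div_self hx]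

/-- A smooth substitute for `min a b`, meant for `a, b ≥ 0`. The argument of the cut-off is
nonpositive for `2 * a ≤ b` and at least one for `2 * b ≤ a`, and exchanging `a` and `b` reflects it
about `1 / 2`. For `a = b = 0` it is the junk value `0 / 0 = 0`, and `smoothMin 0 0 = 0`. -/
noncomputable def smoothMin (a b : ℝ) : ℝ :=
  a + (b - a) * Real.smoothTransition ((2 * a - b) / (a + b))

theorem smoothMin_comm {a b : ℝ} (ha : 0 ≤ a) (hb : 0 ≤ b) : smoothMin a b = smoothMin b a := by
  rcases (add_nonneg ha hb).eq_or_lt with hab | hab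
  · rw [show a = 0 by linarith, show b = 0 by linarith]
  · have reflect : (2 * b - a) / (b + a) = 1 - (2 * a - b) / (a + b) := by
      rw [add_comm b a, eq_sub_iff_add_eq, ← add_div, div_eq_one_iff_eq hab.ne']
      ring
    rw [smoothMin, smoothMin, reflect, smoothTransition_one_sub]
    ring

theorem smoothMin_mul_mul (c a b : ℝ) : smoothMin (c * a) (c * b) = c * smoothMin a b := by
  rcases eq_or_ne c 0 with rfl | hc
  · simp [smoothMin]
  · have ratio : (2 * (c * a) - c * b) / (c * a + c * b) = (2 * a - b) / (a + b) := by
      rw [← mul_add, mul_left_comm, ← mul_sub, mul_div_mul_left _ _ hc]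
    rw [smoothMin, smoothMin, ratio]
    ring

theorem smoothMin_eq_left {a b : ℝ} (ha : 0 ≤ a) (hab : 2 * a ≤ b) : smoothMin a b = a := by
  rw [smoothMin, Real.smoothTransition.zero_of_nonpos, mul_zero, add_zero]
  exact div_nonpos_of_nonpos_of_nonneg (by linarith) (by linarith)

theorem smoothMin_eq_right {a b : ℝ} (hb : 0 ≤ b) (hab : 2 * b ≤ a) : smoothMin a b = b := by
  rw [smoothMin_comm (by linarith) hb, smoothMin_eq_left hb hab]

theorem min_le_smoothMin (a b : ℝ) : min a b ≤ smoothMin a b := by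
  set θ := Real.smoothTransition ((2 * a - b) / (a + b)) with hθ
  have hθ₀ : 0 ≤ θ := Real.smoothTransition.nonneg _
  have hθ₁ : θ ≤ 1 := Real.smoothTransition.le_one _
  calc min a b = (1 - θ) * min a b + θ * min a b := by ring
    _ ≤ (1 - θ) * a + θ * b := by
      have := sub_nonneg.2 hθ₁
      gcongr
      exacts [min_le_left a b, min_le_right a b]
    _ = smoothMin a b := by
      rw [smoothMin, ← hθ]
      ring

theorem contDiffWithinAt_smoothMin {F : Type*} [NormedAddCommGroup F] [NormedSpace ℝ F]
    {f g : F → ℝ} {s : Set F} {x : F} (hf : ContDiffWithinAt ℝ ∞ f s x)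
    (hg : ContDiffWithinAt ℝ ∞ g s x) (hfg : f x + g x ≠ 0) :
    ContDiffWithinAt ℝ ∞ (fun y => smoothMin (f y) (g y)) s x := by
  have ratio : ContDiffWithinAt ℝ ∞ (fun y => (2 * f y - g y) / (f y + g y)) s x :=
    ((contDiffWithinAt_const.mul hf).sub hg).div (hf.add hg) hfg
  exact hf.add ((hg.sub hf).mul (Real.smoothTransition.contDiffAt.comp_contDiffWithinAt x ratio))

theorem smoothMin_one_eq_clamp_add {r : ℝ} (hr : 0 ≤ r) :
    smoothMin r 1 = smoothMin (max (1 / 2) (min r 2)) 1 + (min r (1 / 2) - 1 / 2) := by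
  rcases le_total r (1 / 2) with hr_half | hr_half
  · rw [min_eq_left (by linarith : r ≤ 2), max_eq_left hr_half, min_eq_left hr_half,
      smoothMin_eq_left hr (by linarith), smoothMin_eq_left (by norm_num) (by norm_num)]
    ring
  rw [min_eq_right hr_half, sub_self, add_zero]
  rcases le_total r 2 with hr_two | hr_two
  · rw [min_eq_left hr_two, max_eq_right hr_half]
  · rw [min_eq_right hr_two, max_eq_right (by norm_num),
      smoothMin_eq_right zero_le_one (by linarith), smoothMin_eq_right zero_le_one (by norm_num)]

theorem exists_lipschitzOnWith_smoothMin_one :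
    ∃ K : ℝ≥0, LipschitzOnWith K (smoothMin · 1) (Ici 0) := by
  have smooth : ContDiffOn ℝ ∞ (smoothMin · 1) (Icc (1 / 2) 2) := fun r hr =>
    contDiffWithinAt_smoothMin contDiffWithinAt_id contDiffWithinAt_const
      (by linarith [hr.1] : 0 < r + 1).ne'
  obtain ⟨K, hK⟩ := smooth.exists_lipschitzOnWith (by simp) (convex_Icc _ _) isCompact_Icc
  have clamp : LipschitzOnWith 1 (fun r : ℝ => max (1 / 2) (min r 2)) (Ici 0) :=
    ((LipschitzWith.id.min_const 2).const_max _).lipschitzOnWith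
  have clamp_mem : MapsTo (fun r : ℝ => max (1 / 2) (min r 2)) (Ici 0) (Icc (1 / 2) 2) :=
    fun r _ => ⟨le_max_left _ _, max_le (by norm_num) (min_le_right _ _)⟩
  have truncation : LipschitzOnWith 1 (fun r : ℝ => min r (1 / 2) - 1 / 2) (Ici 0) := by
    simpa using ((LipschitzWith.id.min_const _).sub (.const _)).lipschitzOnWith
  refine ⟨K * 1 + 1, fun r hr s hs => ?_⟩
  simpa only [smoothMin_one_eq_clamp_add (mem_Ici.1 hr), smoothMin_one_eq_clamp_add (mem_Ici.1 hs)]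
    using! (hK.comp clamp clamp_mem).add truncation hr hs

theorem exists_lipschitzOnWith_smoothMin_left :
    ∃ K : ℝ≥0, ∀ b, 0 ≤ b → LipschitzOnWith K (smoothMin · b) (Ici 0) := by
  obtain ⟨K, hK⟩ := exists_lipschitzOnWith_smoothMin_one
  refine ⟨K, fun b hb => LipschitzOnWith.of_dist_le_mul fun a ha a' ha' => ?_⟩
  rw [mem_Ici] at ha ha'
  rcases hb.eq_or_lt with rfl | hb
  · rw [smoothMin_eq_right le_rfl (by simpa), smoothMin_eq_right le_rfl (by simpa), dist_self]
    positivity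
  have rescale (c : ℝ) : smoothMin c b = b * smoothMin (c / b) 1 := by
    rw [← smoothMin_mul_mul, mul_div_cancel₀ c hb.ne', mul_one]
  have dist_mul (c c' : ℝ) : dist (b * c) (b * c') = b * dist c c' := by
    rw [Real.dist_eq, ← mul_sub, abs_mul, abs_of_pos hb, Real.dist_eq]
  calc dist (smoothMin a b) (smoothMin a' b)
      = b * dist (smoothMin (a / b) 1) (smoothMin (a' / b) 1) := by
        rw [rescale, rescale a', dist_mul]
    _ ≤ b * (K * dist (a / b) (a' / b)) := by
        gcongr
        exact hK.dist_le_mul _ (div_nonneg ha hb.le) _ (div_nonneg ha' hb.le)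
    _ = K * dist a a' := by
        rw [mul_left_comm, ← dist_mul, mul_div_cancel₀ a hb.ne', mul_div_cancel₀ a' hb.ne']

theorem exists_lipschitzOnWith_smoothMin :
    ∃ K : ℝ≥0, LipschitzOnWith K (fun q : ℝ × ℝ => smoothMin q.1 q.2) (Ici 0) := by
  obtain ⟨K, hK⟩ := exists_lipschitzOnWith_smoothMin_left
  refine ⟨K + K, LipschitzOnWith.of_dist_le_mul ?_⟩
  rintro ⟨a, b⟩ ⟨ha, hb⟩ ⟨a', b'⟩ ⟨ha', hb'⟩
  calc dist (smoothMin a b) (smoothMin a' b')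
      ≤ dist (smoothMin a b) (smoothMin a' b) + dist (smoothMin a' b) (smoothMin a' b') :=
        dist_triangle _ _ _
    _ = dist (smoothMin a b) (smoothMin a' b) + dist (smoothMin b a') (smoothMin b' a') := by
        rw [smoothMin_comm ha' hb, smoothMin_comm ha' hb']
    _ ≤ K * dist a a' + K * dist b b' :=
        add_le_add ((hK b hb).dist_le_mul a ha a' ha') ((hK a' ha').dist_le_mul b hb b' hb')
    _ ≤ K * dist (a, b) (a', b') + K * dist (a, b) (a', b') := by
        rw [Prod.dist_eq]
        gcongr
        exacts [le_max_left _ _, le_max_right _ _]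
    _ = ↑(K + K) * dist (a, b) (a', b') := by
        push_cast
        ring

end BinarySmoothMin

section FiniteSmoothMin

variable {ι : Type*} [Fintype ι]

/-- `G` is a smooth substitute, on the nonnegative orthant, for the function sending `t` to the
minimum of `t i` over `i ∈ s`. It is bounded below by that minimum, and equals it where the smallest
coordinate is at most half of each of the others. -/
structure IsSmoothMin (s : Finset ι) (G : (ι → ℝ) → ℝ) : Prop where
  contDiffOn : ContDiffOn ℝ ∞ G {t | ∀ i, 0 < t i}
  exists_lipschitzOnWith : ∃ K : ℝ≥0, LipschitzOnWith K G (Ici 0)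
  exists_le : ∀ t, 0 ≤ t → ∃ i ∈ s, t i ≤ G t
  eq_of_two_mul_le : ∀ t, 0 ≤ t → ∀ i ∈ s, (∀ j ∈ s, j ≠ i → 2 * t i ≤ t j) → G t = t i

theorem isSmoothMin_singleton (i : ι) : IsSmoothMin {i} (fun t => t i) where
  contDiffOn := (contDiff_apply ℝ ℝ i).contDiffOn
  exists_lipschitzOnWith := ⟨1, (LipschitzWith.eval i).lipschitzOnWith⟩
  exists_le _ _ := ⟨i, Finset.mem_singleton_self i, le_rfl⟩
  eq_of_two_mul_le _ _ j hj _ := by rw [Finset.mem_singleton.1 hj]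

namespace IsSmoothMin

variable {s : Finset ι} {G : (ι → ℝ) → ℝ}

theorem pos (hG : IsSmoothMin s G) {t : ι → ℝ} (ht : ∀ i, 0 < t i) : 0 < G t := by
  obtain ⟨i, -, hi⟩ := hG.exists_le t fun i => (ht i).le
  exact (ht i).trans_le hi

theorem nonneg (hG : IsSmoothMin s G) {t : ι → ℝ} (ht : 0 ≤ t) : 0 ≤ G t := by
  obtain ⟨i, -, hi⟩ := hG.exists_le t ht
  exact (ht i).trans hi

theorem smoothMin_cons (hG : IsSmoothMin s G) {i : ι} (hi : i ∉ s) :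
    IsSmoothMin (s.cons i hi) (fun t => smoothMin (t i) (G t)) where
  contDiffOn t ht :=
    contDiffWithinAt_smoothMin (contDiff_apply ℝ ℝ i).contDiffWithinAt (hG.contDiffOn t ht)
      (add_pos (ht i) (hG.pos ht)).ne'
  exists_lipschitzOnWith := by
    obtain ⟨K, hK⟩ := hG.exists_lipschitzOnWith
    obtain ⟨L, hL⟩ := exists_lipschitzOnWith_smoothMin
    exact ⟨_, hL.comp ((LipschitzWith.eval i).lipschitzOnWith.prodMk hK)
      fun t ht => ⟨ht i, hG.nonneg ht⟩⟩
  exists_le t ht := by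
    obtain ⟨j, hj, hj_le⟩ := hG.exists_le t ht
    rcases min_le_iff.1 (min_le_smoothMin (t i) (G t)) with h | h
    · exact ⟨i, Finset.mem_cons_self i s, h⟩
    · exact ⟨j, Finset.mem_cons_of_mem hj, hj_le.trans h⟩
  eq_of_two_mul_le t ht j hj h_le := by
    rcases Finset.mem_cons.1 hj with rfl | hj
    · obtain ⟨k, hk, hk_le⟩ := hG.exists_le t ht
      have hkj : k ≠ j := ne_of_mem_of_not_mem hk hi
      exact smoothMin_eq_left (ht j) ((h_le k (Finset.mem_cons_of_mem hk) hkj).trans hk_le)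
    · have hGt : G t = t j :=
        hG.eq_of_two_mul_le t ht j hj fun k hk => h_le k (Finset.mem_cons_of_mem hk)
      have hij : i ≠ j := (ne_of_mem_of_not_mem hj hi).symm
      rw [hGt]
      exact smoothMin_eq_right (ht j) (h_le i (Finset.mem_cons_self i s) hij)

end IsSmoothMin

theorem exists_isSmoothMin {s : Finset ι} (hs : s.Nonempty) : ∃ G, IsSmoothMin s G := by
  induction hs using Finset.Nonempty.cons_induction with
  | singleton i => exact ⟨_, isSmoothMin_singleton i⟩
  | cons i s hi _ ih => exact ih.imp' _ fun G hG => hG.smoothMin_cons hi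

end FiniteSmoothMin

section Polyhedron

variable {E : Type*} [NormedAddCommGroup E] [InnerProductSpace ℝ E]

theorem lipschitzWith_signedDist (v p : E) : LipschitzWith 1 (signedDist v p) :=
  .of_le_add fun x y => by
    rw [← sub_le_iff_le_add', signedDist_triangle_left, dist_comm]
    exact signedDist_le_dist v y x

theorem signedDist_add_smul_normalize {v : E} (hv : v ≠ 0) (p x : E) (r : ℝ) :
    signedDist v p (x + r • NormedSpace.normalize v) = signedDist v p x + r := by
  have := signedDist_vadd_right v (r • NormedSpace.normalize v) p x
  rw [vadd_eq_add, add_comm] at this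
  rw [this, real_inner_smul_right, real_inner_self_eq_norm_sq, NormedSpace.norm_normalize hv]
  ring

theorem isOpenMap_signedDist {v : E} (hv : v ≠ 0) (p : E) : IsOpenMap (signedDist v p) := by
  have linear_eq : ⇑(signedDist v p).linear = innerSL ℝ (NormedSpace.normalize v) := by
    rw [signedDist_apply_linear]
    rfl
  have innerSL_ne_zero : innerSL ℝ (NormedSpace.normalize v) ≠ 0 := by
    simp [← norm_ne_zero_iff, innerSL_apply_norm, NormedSpace.norm_normalize hv]
  rw [← ContinuousAffineMap.coe_toAffineMap, ← AffineMap.isOpenMap_linear_iff, linear_eq]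
  exact ContinuousLinearMap.isOpenMap_of_ne_zero _ innerSL_ne_zero

variable {ι : Type*} {v p : ι → E}

/-- The intersection of the half-spaces bounded by the hyperplanes through `p i` orthogonal to
`v i`, on the side into which `v i` points. A vector `v i = 0` imposes no condition. -/
def polyhedron (v p : ι → E) : Set E := ⋂ i, signedDist (v i) (p i) ⁻¹' Ici 0

theorem isClosed_polyhedron (v p : ι → E) : IsClosed (polyhedron v p) :=
  isClosed_iInter fun i => isClosed_Ici.preimage (signedDist (v i) (p i)).cont

theorem interior_polyhedron [Finite ι] (hv : ∀ i, v i ≠ 0) (p : ι → E) :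
    interior (polyhedron v p) = {x | ∀ i, 0 < signedDist (v i) (p i) x} := by
  have interior_halfSpace (i : ι) : interior (signedDist (v i) (p i) ⁻¹' Ici 0) =
      signedDist (v i) (p i) ⁻¹' Ioi 0 := by
    rw [← (isOpenMap_signedDist (hv i) (p i)).preimage_interior_eq_interior_preimage
      (signedDist (v i) (p i)).cont, interior_Ici]
  ext x
  simp [polyhedron, interior_iInter_of_finite, interior_halfSpace]

theorem mem_frontier_polyhedron [Finite ι] (hv : ∀ i, v i ≠ 0) {x : E} :
    x ∈ frontier (polyhedron v p) ↔ x ∈ polyhedron v p ∧ ∃ i, signedDist (v i) (p i) x ≤ 0 := by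
  simp [(isClosed_polyhedron v p).frontier_eq, interior_polyhedron hv]

theorem infDist_frontier_polyhedron [Finite ι] (hv : ∀ i, v i ≠ 0) {x : E}
    (hx : x ∈ polyhedron v p) {i : ι}
    (hi : ∀ j, signedDist (v i) (p i) x ≤ signedDist (v j) (p j) x) :
    infDist x (frontier (polyhedron v p)) = signedDist (v i) (p i) x := by
  set r := signedDist (v i) (p i) x with hr
  have hr₀ : 0 ≤ r := mem_iInter.1 hx i
  set foot := x + (-r) • NormedSpace.normalize (v i)
  have dist_foot : dist x foot = r := by
    simp [foot, NormedSpace.norm_normalize (hv i), norm_smul, abs_of_nonneg hr₀]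
  have dist_le_add (j : ι) (y : E) :
      signedDist (v j) (p j) x ≤ signedDist (v j) (p j) y + dist x y := by
    simpa using (lipschitzWith_signedDist (v j) (p j)).le_add_mul x y
  have foot_mem : foot ∈ frontier (polyhedron v p) := by
    refine (mem_frontier_polyhedron hv).2 ⟨mem_iInter.2 fun j => ?_, i, ?_⟩
    · rw [mem_preimage, mem_Ici]
      linarith [dist_le_add j foot, hi j]
    · rw [signedDist_add_smul_normalize (hv i), ← hr, add_neg_cancel]
  refine le_antisymm ((infDist_le_dist_of_mem foot_mem).trans_eq dist_foot)
    ((le_infDist ⟨foot, foot_mem⟩).2 fun y hy => ?_)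
  obtain ⟨-, j, hj⟩ := (mem_frontier_polyhedron hv).1 hy
  linarith [dist_le_add j y, hi j]

/-- The points whose signed distance to the `i`-th hyperplane is less than half of their signed
distances to all the others: a neighborhood of the relative interior of the `i`-th facet. -/
def nearFacet (v p : ι → E) (i : ι) : Set E :=
  {x | ∀ j, j ≠ i → 2 * signedDist (v i) (p i) x < signedDist (v j) (p j) x}

theorem isOpen_nearFacet [Finite ι] (v p : ι → E) (i : ι) : IsOpen (nearFacet v p i) := by
  simp only [nearFacet, ofPred_forall]
  exact isOpen_iInter_of_finite fun j => isOpen_iInter_of_finite fun _ =>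
    isOpen_lt (continuous_const.mul (signedDist (v i) (p i)).cont) (signedDist (v j) (p j)).cont

theorem exists_smooth_eq_infDist_frontier_polyhedron [Finite ι] [Nonempty ι]
    (hv : ∀ i, v i ≠ 0) (p : ι → E) :
    ∃ (f : E → ℝ) (C : ℝ≥0), (∀ x ∈ interior (polyhedron v p), 0 < f x) ∧
      ContDiffOn ℝ ∞ f (interior (polyhedron v p)) ∧
      (∀ x ∈ (⋃ i, nearFacet v p i) ∩ polyhedron v p,
        f x = infDist x (frontier (polyhedron v p))) ∧
      LipschitzOnWith C f (polyhedron v p) := by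
  have := Fintype.ofFinite ι
  obtain ⟨G, hG⟩ := exists_isSmoothMin (Finset.univ_nonempty (α := ι))
  obtain ⟨K, hK⟩ := hG.exists_lipschitzOnWith
  let d (x : E) (i : ι) : ℝ := signedDist (v i) (p i) x
  have d_smooth : ContDiff ℝ ∞ d := contDiff_pi.2 fun i => (signedDist (v i) (p i)).contDiff
  have d_lipschitz : LipschitzWith 1 d := .mk_one fun x y => (dist_pi_le_iff dist_nonneg).2
    fun i => by simpa using (lipschitzWith_signedDist (v i) (p i)).dist_le_mul x y
  have d_nonneg : MapsTo d (polyhedron v p) (Ici 0) := fun x hx i => mem_iInter.1 hx i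
  refine ⟨G ∘ d, K * 1, ?_, ?_, ?_, hK.comp d_lipschitz.lipschitzOnWith d_nonneg⟩
  · rw [interior_polyhedron hv]
    exact fun x hx => hG.pos hx
  · rw [interior_polyhedron hv]
    exact hG.contDiffOn.comp d_smooth.contDiffOn fun x hx => hx
  · rintro x ⟨hx_near, hx⟩
    obtain ⟨i, hi⟩ := mem_iUnion.1 hx_near
    have d_min (j : ι) : d x i ≤ d x j := by
      rcases eq_or_ne j i with rfl | hj
      · exact le_rfl
      · exact (le_mul_of_one_le_left (d_nonneg hx i) one_le_two).trans (hi j hj).le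
    rw [infDist_frontier_polyhedron hv hx d_min]
    exact hG.eq_of_two_mul_le (d x) (d_nonneg hx) i (Finset.mem_univ i) fun j _ hj => (hi j hj).le

end Polyhedron

section Simplex

open Affine

theorem sum_smul_points_mem_convexHull_iff {E : Type*} [AddCommGroup E] [Module ℝ E] {n : ℕ}
    (S : Simplex ℝ E n) {w : Fin (n + 1) → ℝ} (hw : ∑ j, w j = 1) :
    ∑ j, w j • S.points j ∈ convexHull ℝ (range S.points) ↔ ∀ i, 0 ≤ w i := by
  rw [S.convexHull_eq_closedInterior, ← Finset.affineCombination_eq_linear_combination _ _ _ hw,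
    Simplex.affineCombination_mem_closedInterior_iff hw]
  refine ⟨fun h i => (h i).1, fun h i => ⟨h i, ?_⟩⟩
  exact hw ▸ Finset.single_le_sum (fun j _ => h j) (Finset.mem_univ i)

variable {E : Type*} [NormedAddCommGroup E] [InnerProductSpace ℝ E] {n : ℕ} [NeZero n]

theorem signedDist_altitudeFoot (S : Simplex ℝ E n) (i : Fin (n + 1)) :
    signedDist (S.points i - S.altitudeFoot i) (S.altitudeFoot i) = S.signedInfDist i := by
  rw [Simplex.signedInfDist, AffineSubspace.signedInfDist_eq_signedDist_of_mem
    (S.altitudeFoot_mem_affineSpan_image_compl i)]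
  simp [Simplex.altitudeFoot, Simplex.orthogonalProjectionSpan]

theorem signedDist_altitudeFoot_sum_smul (S : Simplex ℝ E n) (i : Fin (n + 1))
    {w : Fin (n + 1) → ℝ} (hw : ∑ j, w j = 1) :
    signedDist (S.points i - S.altitudeFoot i) (S.altitudeFoot i) (∑ j, w j • S.points j) =
      w i * S.height i := by
  rw [signedDist_altitudeFoot, ← Finset.affineCombination_eq_linear_combination _ _ _ hw,
    S.signedInfDist_affineCombination i hw, Simplex.height, dist_eq_norm_vsub]
  rfl

theorem convexHull_range_points_eq_polyhedron (S : Simplex ℝ E n)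
    (hS : affineSpan ℝ (range S.points) = ⊤) :
    convexHull ℝ (range S.points) =
      polyhedron (fun i => S.points i - S.altitudeFoot i) S.altitudeFoot := by
  ext x
  obtain ⟨w, hw, rfl⟩ := eq_affineCombination_of_mem_affineSpan_of_fintype
    (hS ▸ AffineSubspace.mem_top ℝ E x)
  rw [Finset.affineCombination_eq_linear_combination _ _ _ hw,
    sum_smul_points_mem_convexHull_iff S hw]
  simp [polyhedron, signedDist_altitudeFoot_sum_smul S _ hw, mul_nonneg_iff_of_pos_right]

theorem statement0_general (S : Simplex ℝ E n) (hS : affineSpan ℝ (range S.points) = ⊤) :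
    ∃ (f : E → ℝ) (V : Set E) (C : ℝ≥0),
      IsOpen V ∧
      (⋃ i, {x | ∃ w : Fin (n + 1) → ℝ, (∑ j, w j) = 1 ∧ w i = 0 ∧
        (∀ j, j ≠ i → 0 < w j) ∧ (∑ j, w j • S.points j) = x}) ⊆ V ∧
      (∀ x ∈ interior (convexHull ℝ (range S.points)), 0 < f x) ∧
      ContDiffOn ℝ ∞ f (interior (convexHull ℝ (range S.points))) ∧
      (∀ x ∈ V ∩ convexHull ℝ (range S.points),
        f x = infDist x (frontier (convexHull ℝ (range S.points)))) ∧
      LipschitzOnWith C f (convexHull ℝ (range S.points)) := by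
  let v i := S.points i - S.altitudeFoot i
  have hv (i) : v i ≠ 0 := sub_ne_zero.2 (S.ne_altitudeFoot i)
  obtain ⟨f, C, f_pos, f_smooth, f_eq, f_lipschitz⟩ :=
    exists_smooth_eq_infDist_frontier_polyhedron hv S.altitudeFoot
  rw [convexHull_range_points_eq_polyhedron S hS]
  refine ⟨f, ⋃ i, nearFacet v S.altitudeFoot i, C, isOpen_iUnion (isOpen_nearFacet v _),
    iUnion_mono fun i => ?_, f_pos, f_smooth, f_eq, f_lipschitz⟩
  rintro _ ⟨w, hw, hwi, hw_pos, rfl⟩ j hj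
  rw [signedDist_altitudeFoot_sum_smul S i hw, signedDist_altitudeFoot_sum_smul S j hw, hwi,
    zero_mul, mul_zero]
  exact mul_pos (hw_pos j hj) (S.height_pos j)

end Simplex

section StandardSimplex

variable (m : ℕ)

theorem sum_smul_stdVertex_apply (w : Fin (m + 1) → ℝ) (k : Fin m) :
    (∑ j, w j • stdVertex m j) k = w k.succ := by
  rw [Fin.sum_univ_succ]
  simp [stdVertex, Pi.single_apply]

theorem affineIndependent_stdVertex : AffineIndependent ℝ (stdVertex m) := by
  refine (affineIndependent_iff_of_fintype ℝ _).2 fun w hw hsum => ?_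
  rw [Finset.weightedVSub_eq_linear_combination _ hw] at hsum
  have w_succ (k : Fin m) : w k.succ = 0 := by
    rw [← sum_smul_stdVertex_apply m w k, hsum, PiLp.zero_apply]
  have w_zero : w 0 = 0 := by simpa [Fin.sum_univ_succ, w_succ] using hw
  exact Fin.cases w_zero w_succ

theorem affineSpan_range_stdVertex : affineSpan ℝ (range (stdVertex m)) = ⊤ := by
  simp [(affineIndependent_stdVertex m).affineSpan_eq_top_iff_card_eq_finrank_add_one]

end StandardSimplex

/-- There are a Lipschitz function `f : Ω → ℝ`, a neighborhood `V` of `⋃ i, F i`, and a constant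
`C = C(m)` such that `f` is positive and smooth in the interior of `Ω`, coincides with
`dist (·, ∂Ω)` on `V ∩ Ω`, and is `C`-Lipschitz on `Ω`. -/
theorem statement0 (m : ℕ) (hm : 0 < m) :
    ∃ (f : EuclideanSpace ℝ (Fin m) → ℝ) (V : Set (EuclideanSpace ℝ (Fin m))) (C : NNReal),
      IsOpen V ∧ (⋃ i, openFacet m i) ⊆ V ∧
      (∀ x ∈ interior (stdSimplexSet m), 0 < f x) ∧
      ContDiffOn ℝ (⊤ : ℕ∞) f (interior (stdSimplexSet m)) ∧
      (∀ x ∈ V ∩ stdSimplexSet m, f x = Metric.infDist x (frontier (stdSimplexSet m))) ∧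
      LipschitzOnWith C f (stdSimplexSet m) := by
  have : NeZero m := ⟨hm.ne'⟩
  exact statement0_general ⟨stdVertex m, affineIndependent_stdVertex m⟩
    (affineSpan_range_stdVertex m)
end

section
/- For every dimension d ≥ 1 and all real numbers ε > 0 and η > 0 there exists δ with 0 < δ < η, depending only on d, ε and η, such that for every μ ∈ (0, 1] there is a smooth diffeomorphism Ψ : ℝ^d → ℝ^d with the following properties: (1) Ψ(x) = μ·x for every x with |x| ≤ δ; (2) Ψ(x) = x for every x with |x| ≥ η; (3) Ψ is Lipschitz with Lipschitz constant at most 1 + ε. Moreover Ψ can be taken radial, of the form Ψ(x) = ψ(|x|)·x/|x| for an increasing smooth function ψ : [0,∞) → [0,∞). -/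
open Set Function

/-!
Take `ψ t = t * (μ + (1 - μ) * S (log (t / δ) / log (η / δ)))`, where `S` is a smooth step from
`0` to `1`. Since the step is taken in the variable `log t`, the factor `t` cancels the `1 / t`
produced by the chain rule, and `ψ' = μ + (1 - μ) * (S + S' / log (η / δ))` lies between `μ` and
`1 + sup S' / log (η / δ)`. The upper bound is at most `1 + ε` once `η / δ` is large enough,
whatever `μ` is. A radial map of an inner product space is as Lipschitz as its profile: the squared
distance of the images splits into a radial part `(ψ ‖x‖ - ψ ‖y‖) ^ 2` and an angular part scaled
by `(ψ ‖x‖ / ‖x‖) * (ψ ‖y‖ / ‖y‖)`, and both scale by at most the squared Lipschitz constant.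
-/

open Filter Topology
open scoped NNReal

lemma exists_contDiff_inverse_of_deriv_pos {f : ℝ → ℝ} {n : WithTop ℕ∞} (hf : ContDiff ℝ n f)
    (hderiv : ∀ t, 0 < deriv f t) (hsurj : Surjective f) :
    ∃ g : ℝ → ℝ, ContDiff ℝ n g ∧ LeftInverse g f ∧ RightInverse g f :=
  let e : ℝ ≃ₜ ℝ :=
    ((strictMono_of_deriv_pos hderiv).orderIsoOfSurjective f hsurj).toHomeomorph
  have hderiv_ne (t : ℝ) : deriv f t ≠ 0 := (hderiv t).ne'
  ⟨e.symm, e.contDiff_symm_deriv hderiv_ne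
    (fun t => (differentiableAt_of_deriv_ne_zero (hderiv_ne t)).hasDerivAt) hf,
    e.symm_apply_apply, e.apply_symm_apply⟩

section RadialMap

/-- The radial map `x ↦ f(|x|) x / |x|` with profile `f`. It sends `0` to `0`, whatever `f 0` is. -/
noncomputable def radialMap {E : Type*} [NormedAddCommGroup E] [NormedSpace ℝ E]
    (f : ℝ → ℝ) (x : E) : E :=
  (f ‖x‖ / ‖x‖) • x

section NormedSpace

variable {E : Type*} [NormedAddCommGroup E] [NormedSpace ℝ E] {f g : ℝ → ℝ}

lemma radialMap_zero (f : ℝ → ℝ) : radialMap f (0 : E) = 0 :=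
  smul_zero _

lemma radialMap_eq_smul {c : ℝ} {x : E} (h : f ‖x‖ = c * ‖x‖) : radialMap f x = c • x := by
  rcases eq_or_ne x 0 with rfl | hx
  · rw [radialMap_zero, smul_zero]
  · rw [radialMap, h, mul_div_cancel_right₀ _ (norm_ne_zero_iff.2 hx)]

lemma radialMap_comp_apply {x : E} (hf : MapsTo f (Ioi 0) (Ioi 0)) :
    radialMap g (radialMap f x) = radialMap (g ∘ f) x := by
  rcases eq_or_ne x 0 with rfl | hx
  · simp only [radialMap_zero]
  have hnorm : 0 < ‖x‖ := norm_pos_iff.2 hx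
  have hfx : 0 < f ‖x‖ := hf hnorm
  have hnorm_image : ‖radialMap f x‖ = f ‖x‖ := by
    rw [radialMap, norm_smul, Real.norm_of_nonneg (by positivity), div_mul_cancel₀ _ hnorm.ne']
  rw [radialMap, hnorm_image, radialMap, smul_smul, div_mul_div_cancel₀ hfx.ne']
  rfl

lemma leftInverse_radialMap (hf : MapsTo f (Ioi 0) (Ioi 0)) (hgf : LeftInvOn g f (Ioi 0)) :
    LeftInverse (radialMap g : E → E) (radialMap f) := by
  intro x
  rcases eq_or_ne x 0 with rfl | hx
  · simp only [radialMap_zero]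
  have hgfx : (g ∘ f) ‖x‖ = 1 * ‖x‖ := by rw [one_mul]; exact hgf (norm_pos_iff.2 hx)
  rw [radialMap_comp_apply hf, radialMap_eq_smul hgfx, one_smul]

end NormedSpace

variable {E : Type*} [NormedAddCommGroup E] [InnerProductSpace ℝ E] {f : ℝ → ℝ}

lemma contDiff_radialMap {n : WithTop ℕ∞} {c : ℝ} (hf : ContDiffOn ℝ n f (Ioi 0))
    (hlin : ∀ᶠ t in 𝓝[≥] 0, f t = c * t) : ContDiff ℝ n (radialMap f : E → E) := by
  rw [contDiff_iff_contDiffAt]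
  intro x
  rcases eq_or_ne x 0 with rfl | hx
  · have hnorm : Tendsto (norm : E → ℝ) (𝓝 0) (𝓝[≥] 0) :=
      tendsto_nhdsWithin_iff.2 ⟨tendsto_norm_zero, .of_forall norm_nonneg⟩
    exact (contDiffAt_id.const_smul c).congr_of_eventuallyEq
      ((hnorm.eventually hlin).mono fun _ => radialMap_eq_smul)
  · have hnorm : ContDiffAt ℝ n (norm : E → ℝ) x := contDiffAt_norm ℝ hx
    have hfx : ContDiffAt ℝ n f ‖x‖ := hf.contDiffAt (Ioi_mem_nhds (norm_pos_iff.2 hx))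
    exact ((hfx.comp x hnorm).div hnorm (norm_ne_zero_iff.2 hx)).smul contDiffAt_id

lemma norm_radialMap_sub_sq (hf0 : f 0 = 0) (x y : E) :
    ‖radialMap f x - radialMap f y‖ ^ 2 = (f ‖x‖ - f ‖y‖) ^ 2 +
      2 * (f ‖x‖ / ‖x‖ * (f ‖y‖ / ‖y‖)) * (‖x‖ * ‖y‖ - inner ℝ x y) := by
  have hcancel (r : ℝ) : f r / r * r = f r := div_mul_cancel_of_imp fun hr => hr ▸ hf0
  have hx := hcancel ‖x‖
  have hy := hcancel ‖y‖
  rw [radialMap, radialMap, norm_sub_sq_real, norm_smul, norm_smul, real_inner_smul_left,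
    real_inner_smul_right, mul_pow, mul_pow, Real.norm_eq_abs, Real.norm_eq_abs, sq_abs, sq_abs]
  generalize f ‖x‖ / ‖x‖ = a at *
  generalize f ‖y‖ / ‖y‖ = b at *
  rw [← hx, ← hy]
  ring

lemma lipschitzWith_radialMap {K : ℝ≥0} (hf0 : f 0 = 0) (hf : LipschitzOnWith K f (Ici 0)) :
    LipschitzWith K (radialMap f : E → E) := by
  have hslope (z : E) : |f ‖z‖ / ‖z‖| ≤ K := by
    have h := hf.dist_le_mul _ (norm_nonneg z) 0 self_mem_Ici
    rw [hf0, Real.dist_0_eq_abs, Real.dist_0_eq_abs, abs_norm] at h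
    rw [abs_div, abs_norm]
    exact div_le_of_le_mul₀ (norm_nonneg z) K.2 h
  refine .of_dist_le_mul fun x y => ?_
  rw [dist_eq_norm, dist_eq_norm]
  refine le_of_sq_le_sq ?_ (by positivity)
  have hradial : (f ‖x‖ - f ‖y‖) ^ 2 ≤ (K * (‖x‖ - ‖y‖)) ^ 2 := by
    rw [sq_le_sq, abs_mul, NNReal.abs_eq]
    exact hf.dist_le_mul _ (norm_nonneg x) _ (norm_nonneg y)
  have hscale : f ‖x‖ / ‖x‖ * (f ‖y‖ / ‖y‖) ≤ K * K :=
    (le_abs_self _).trans <| abs_mul (f ‖x‖ / ‖x‖) _ ▸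
      mul_le_mul (hslope x) (hslope y) (abs_nonneg _) K.2
  have hangle : 0 ≤ ‖x‖ * ‖y‖ - inner ℝ x y := sub_nonneg.2 (real_inner_le_norm x y)
  calc ‖radialMap f x - radialMap f y‖ ^ 2
      = (f ‖x‖ - f ‖y‖) ^ 2 +
          2 * (f ‖x‖ / ‖x‖ * (f ‖y‖ / ‖y‖)) * (‖x‖ * ‖y‖ - inner ℝ x y) :=
        norm_radialMap_sub_sq hf0 x y
    _ ≤ (K * (‖x‖ - ‖y‖)) ^ 2 + 2 * (K * K) * (‖x‖ * ‖y‖ - inner ℝ x y) := by gcongr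
    _ = (K * ‖x - y‖) ^ 2 := by rw [mul_pow _ ‖x - y‖, norm_sub_sq_real]; ring

lemma exists_contDiff_inverse_radialMap {n : WithTop ℕ∞} {c : ℝ} (hf : ContDiff ℝ n f)
    (hderiv : ∀ t, 0 < deriv f t) (hsurj : Surjective f) (hlin : ∀ᶠ t in 𝓝 0, f t = c * t) :
    ∃ Φ : E → E, ContDiff ℝ n Φ ∧
      LeftInverse Φ (radialMap f) ∧ RightInverse Φ (radialMap f) := by
  obtain ⟨g, hg, hgf, hfg⟩ := exists_contDiff_inverse_of_deriv_pos hf hderiv hsurj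
  have hmono : StrictMono f := strictMono_of_deriv_pos hderiv
  have hc : c ≠ 0 := by
    have hderiv0 : deriv f 0 = c := by simpa using EventuallyEq.deriv_eq hlin
    exact hderiv0 ▸ (hderiv 0).ne'
  have hf0 : f 0 = 0 := by simpa only [mul_zero] using hlin.self_of_nhds
  have hg0 : g 0 = 0 := by simpa only [hf0] using hgf 0
  have hf_pos : MapsTo f (Ioi 0) (Ioi 0) := fun t ht => hf0 ▸ hmono ht
  have hg_pos : MapsTo g (Ioi 0) (Ioi 0) := fun t ht =>
    hmono.lt_iff_lt.1 (by rwa [hf0, hfg])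
  have hg_lin : ∀ᶠ t in 𝓝 0, g t = c⁻¹ * t := by
    have hg_tendsto : Tendsto g (𝓝 0) (𝓝 0) := hg.continuous.tendsto' 0 0 hg0
    filter_upwards [hg_tendsto.eventually hlin] with t ht
    rw [← hfg t, hgf, ht, inv_mul_cancel_left₀ hc]
  exact ⟨radialMap g, contDiff_radialMap hg.contDiffOn (hg_lin.filter_mono nhdsWithin_le_nhds),
    leftInverse_radialMap hf_pos (hgf.leftInvOn _), leftInverse_radialMap hg_pos (hfg.leftInvOn _)⟩

end RadialMap

section SmoothTransition

lemma deriv_smoothTransition_of_nonpos {t : ℝ} (ht : t ≤ 0) : deriv Real.smoothTransition t = 0 :=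
  IsLocalMin.deriv_eq_zero <| .of_forall fun s => by
    rw [Real.smoothTransition.zero_of_nonpos ht]
    exact Real.smoothTransition.nonneg s

lemma deriv_smoothTransition_of_one_le {t : ℝ} (ht : 1 ≤ t) : deriv Real.smoothTransition t = 0 :=
  IsLocalMax.deriv_eq_zero <| .of_forall fun s => by
    rw [Real.smoothTransition.one_of_one_le ht]
    exact Real.smoothTransition.le_one s

lemma exists_deriv_smoothTransition_le : ∃ C > 0, ∀ t, deriv Real.smoothTransition t ≤ C := by
  have hcont : Continuous (deriv Real.smoothTransition) :=
    (Real.smoothTransition.contDiff (n := 1)).continuous_deriv le_rfl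
  have hsupp : HasCompactSupport (deriv Real.smoothTransition) :=
    .intro (isCompact_Icc (a := 0) (b := 1)) fun t ht => by
      rcases le_or_gt t 0 with h | h
      · exact deriv_smoothTransition_of_nonpos h
      · exact deriv_smoothTransition_of_one_le (not_le.1 fun h1 => ht ⟨h.le, h1⟩).le
  obtain ⟨C, hC⟩ := hcont.bounded_above_of_compact_support hsupp
  exact ⟨max C 1, by positivity, fun t =>
    (Real.le_norm_self _).trans ((hC t).trans (le_max_left _ _))⟩

end SmoothTransition

section ContractionProfile

/-- The radial profile interpolating between `t ↦ μ t` on `[0, δ]` and the identity on `[η, ∞)`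
by a smooth step in the variable `log t`. As `Real.log t = log |t|`, it is odd on the real line. -/
noncomputable def contractionProfile (δ η μ t : ℝ) : ℝ :=
  t * (μ + (1 - μ) * Real.smoothTransition (Real.log (t / δ) / Real.log (η / δ)))

variable {δ η μ t : ℝ}

lemma log_div_pos (hδ : 0 < δ) (hδη : δ < η) : 0 < Real.log (η / δ) :=
  Real.log_pos ((one_lt_div hδ).2 hδη)

lemma contractionProfile_of_abs_le (hδ : 0 < δ) (hδη : δ < η) (ht : |t| ≤ δ) :
    contractionProfile δ η μ t = μ * t := by
  have hlog : Real.log (t / δ) ≤ 0 := by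
    rw [← Real.log_abs, abs_div, abs_of_pos hδ]
    exact Real.log_nonpos (by positivity) (div_le_one_of_le₀ ht hδ.le)
  rw [contractionProfile, Real.smoothTransition.zero_of_nonpos
    (div_nonpos_of_nonpos_of_nonneg hlog (log_div_pos hδ hδη).le)]
  ring

lemma contractionProfile_of_le_abs (hδ : 0 < δ) (hδη : δ < η) (ht : η ≤ |t|) :
    contractionProfile δ η μ t = t := by
  have hlog : Real.log (η / δ) ≤ Real.log (t / δ) := by
    rw [← Real.log_abs (t / δ), abs_div, abs_of_pos hδ]
    exact Real.log_le_log (div_pos (hδ.trans hδη) hδ) (by gcongr)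
  rw [contractionProfile, Real.smoothTransition.one_of_one_le
    ((one_le_div (log_div_pos hδ hδη)).2 hlog)]
  ring

lemma contractionProfile_eventuallyEq (hδ : 0 < δ) (hδη : δ < η) :
    ∀ᶠ t in 𝓝 0, contractionProfile δ η μ t = μ * t := by
  filter_upwards [Metric.closedBall_mem_nhds (0 : ℝ) hδ] with t ht
  exact contractionProfile_of_abs_le hδ hδη (by simpa using ht)

lemma contDiff_contractionProfile {n : ℕ∞} (hδ : 0 < δ) (hδη : δ < η) :
    ContDiff ℝ n (contractionProfile δ η μ) := by
  rw [contDiff_iff_contDiffAt]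
  intro t
  rcases eq_or_ne t 0 with rfl | ht
  · exact (contDiffAt_const.mul contDiffAt_id).congr_of_eventuallyEq
      (contractionProfile_eventuallyEq hδ hδη)
  · have hlog : ContDiffAt ℝ n (fun s => Real.log (s / δ) / Real.log (η / δ)) t :=
      ((contDiffAt_id.div_const δ).log (div_ne_zero ht hδ.ne')).div_const _
    exact contDiffAt_id.mul <| contDiffAt_const.add <| contDiffAt_const.mul <|
      Real.smoothTransition.contDiffAt.comp t hlog

lemma deriv_contractionProfile (hδ : 0 < δ) (hδη : δ < η) (μ t : ℝ) :
    deriv (contractionProfile δ η μ) t =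
      μ + (1 - μ) * (Real.smoothTransition (Real.log (t / δ) / Real.log (η / δ)) +
        deriv Real.smoothTransition (Real.log (t / δ) / Real.log (η / δ)) /
          Real.log (η / δ)) := by
  rcases eq_or_ne t 0 with rfl | ht
  · -- Both sides are `μ`, because `Real.log 0 = 0`.
    rw [EventuallyEq.deriv_eq (contractionProfile_eventuallyEq hδ hδη)]
    simp [deriv_smoothTransition_of_nonpos]
  set u := Real.log (t / δ) / Real.log (η / δ)
  have hlog : HasDerivAt (fun s => Real.log (s / δ) / Real.log (η / δ))
      (1 / δ / (t / δ) / Real.log (η / δ)) t :=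
    (((hasDerivAt_id t).div_const δ).log (div_ne_zero ht hδ.ne')).div_const _
  have hstep : HasDerivAt Real.smoothTransition (deriv Real.smoothTransition u) u :=
    ((Real.smoothTransition.contDiff (n := 1)).differentiable one_ne_zero u).hasDerivAt
  have hprofile : HasDerivAt (contractionProfile δ η μ)
      (1 * (μ + (1 - μ) * Real.smoothTransition u) + t * ((1 - μ) *
        (deriv Real.smoothTransition u * (1 / δ / (t / δ) / Real.log (η / δ))))) t :=
    (hasDerivAt_id t).mul (((hstep.comp t hlog).const_mul (1 - μ)).const_add μ)
  have hcancel : 1 / δ / (t / δ) = 1 / t := by field_simp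
  rw [hprofile.deriv, hcancel]
  field_simp
  ring

lemma le_deriv_contractionProfile (hδ : 0 < δ) (hδη : δ < η) (hμ : μ ≤ 1) (t : ℝ) :
    μ ≤ deriv (contractionProfile δ η μ) t := by
  have hlog : 0 < Real.log (η / δ) := log_div_pos hδ hδη
  rw [deriv_contractionProfile hδ hδη]
  exact le_add_of_nonneg_right <| mul_nonneg (sub_nonneg.2 hμ) <|
    add_nonneg (Real.smoothTransition.nonneg _) <|
      div_nonneg Real.smoothTransition.monotone.deriv_nonneg hlog.le

lemma deriv_contractionProfile_le {C : ℝ} (hC : ∀ s, deriv Real.smoothTransition s ≤ C)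
    (hδ : 0 < δ) (hδη : δ < η) (hμ0 : 0 ≤ μ) (hμ1 : μ ≤ 1) (t : ℝ) :
    deriv (contractionProfile δ η μ) t ≤ 1 + C / Real.log (η / δ) := by
  have hlog : 0 < Real.log (η / δ) := log_div_pos hδ hδη
  have hC0 : 0 ≤ C := Real.smoothTransition.monotone.deriv_nonneg.trans (hC 0)
  have hslope : 0 ≤ C / Real.log (η / δ) := div_nonneg hC0 hlog.le
  rw [deriv_contractionProfile hδ hδη]
  set u := Real.log (t / δ) / Real.log (η / δ)
  calc μ + (1 - μ) * (Real.smoothTransition u +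
        deriv Real.smoothTransition u / Real.log (η / δ))
      ≤ μ + (1 - μ) * (1 + C / Real.log (η / δ)) := by
        gcongr
        · exact Real.smoothTransition.le_one u
        · exact hC u
    _ = 1 + C / Real.log (η / δ) - μ * (C / Real.log (η / δ)) := by ring
    _ ≤ 1 + C / Real.log (η / δ) := sub_le_self _ (mul_nonneg hμ0 hslope)

lemma lipschitzWith_contractionProfile {C : ℝ} (hC : ∀ s, deriv Real.smoothTransition s ≤ C)
    (hδ : 0 < δ) (hδη : δ < η) (hμ0 : 0 ≤ μ) (hμ1 : μ ≤ 1) :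
    LipschitzWith (1 + C / Real.log (η / δ)).toNNReal (contractionProfile δ η μ) := by
  refine lipschitzWith_of_nnnorm_deriv_le
    ((contDiff_contractionProfile (n := 1) hδ hδη).differentiable one_ne_zero) fun t => ?_
  have hderiv : 0 ≤ deriv (contractionProfile δ η μ) t :=
    hμ0.trans (le_deriv_contractionProfile hδ hδη hμ1 t)
  rw [← Real.toNNReal_eq_nnnorm_of_nonneg hderiv]
  exact Real.toNNReal_le_toNNReal (deriv_contractionProfile_le hC hδ hδη hμ0 hμ1 t)

lemma surjective_contractionProfile (hδ : 0 < δ) (hδη : δ < η) :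
    Surjective (contractionProfile δ η μ) := by
  refine (contDiff_contractionProfile (n := 0) hδ hδη).continuous.surjective ?_ ?_
  · refine tendsto_id.congr' ?_
    filter_upwards [eventually_ge_atTop η] with t ht
    exact (contractionProfile_of_le_abs hδ hδη (ht.trans (le_abs_self t))).symm
  · refine tendsto_id.congr' ?_
    filter_upwards [eventually_le_atBot (-η)] with t ht
    exact (contractionProfile_of_le_abs hδ hδη ((le_neg.1 ht).trans (neg_le_abs t))).symm

end ContractionProfile

lemma exists_lt_and_log_div_eq {η r : ℝ} (hη : 0 < η) (hr : 0 < r) :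
    ∃ δ, 0 < δ ∧ δ < η ∧ Real.log (η / δ) = r := by
  refine ⟨η / Real.exp r, by positivity, div_lt_self hη (Real.one_lt_exp_iff.2 hr), ?_⟩
  rw [div_div_cancel₀ hη.ne', Real.log_exp]

theorem statement2_general {E : Type*} [NormedAddCommGroup E] [InnerProductSpace ℝ E]
    (ε η : ℝ) (hε : 0 < ε) (hη : 0 < η) :
    ∃ δ : ℝ, 0 < δ ∧ δ < η ∧
      ∀ μ : ℝ, 0 < μ → μ ≤ 1 →
        ∃ (Ψ Φ : E → E) (ψ : ℝ → ℝ),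
          ContDiff ℝ (⊤ : ℕ∞) Ψ ∧ ContDiff ℝ (⊤ : ℕ∞) Φ ∧
          LeftInverse Φ Ψ ∧ RightInverse Φ Ψ ∧
          (∀ x, ‖x‖ ≤ δ → Ψ x = μ • x) ∧
          (∀ x, η ≤ ‖x‖ → Ψ x = x) ∧
          LipschitzWith (Real.toNNReal (1 + ε)) Ψ ∧
          StrictMonoOn ψ (Ici 0) ∧
          ContDiffOn ℝ (⊤ : ℕ∞) ψ (Ici 0) ∧
          (∀ t, 0 ≤ t → 0 ≤ ψ t) ∧
          (∀ x, x ≠ 0 → Ψ x = (ψ ‖x‖ / ‖x‖) • x) := by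
  obtain ⟨C, hC0, hC⟩ := exists_deriv_smoothTransition_le
  obtain ⟨δ, hδ, hδη, hlog⟩ := exists_lt_and_log_div_eq hη (div_pos hC0 hε)
  refine ⟨δ, hδ, hδη, fun μ hμ0 hμ1 => ?_⟩
  set ψ := contractionProfile δ η μ
  have hψ : ContDiff ℝ (⊤ : ℕ∞) ψ := contDiff_contractionProfile hδ hδη
  have hderiv (t : ℝ) : 0 < deriv ψ t := hμ0.trans_le (le_deriv_contractionProfile hδ hδη hμ1 t)
  have hmono : StrictMono ψ := strictMono_of_deriv_pos hderiv
  have hlin : ∀ᶠ t in 𝓝 0, ψ t = μ * t := contractionProfile_eventuallyEq hδ hδη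
  have hψ0 : ψ 0 = 0 := zero_mul _
  have hlip : LipschitzWith (1 + ε).toNNReal ψ := by
    simpa only [hlog, div_div_cancel₀ hC0.ne'] using
      lipschitzWith_contractionProfile hC hδ hδη hμ0.le hμ1
  obtain ⟨Φ, hΦ, hΦψ, hψΦ⟩ := exists_contDiff_inverse_radialMap (E := E) hψ hderiv
    (surjective_contractionProfile hδ hδη) hlin
  refine ⟨radialMap ψ, Φ, ψ, contDiff_radialMap hψ.contDiffOn (hlin.filter_mono nhdsWithin_le_nhds),
    hΦ, hΦψ, hψΦ, fun x hx => ?_, fun x hx => ?_, lipschitzWith_radialMap hψ0 hlip.lipschitzOnWith,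
    hmono.strictMonoOn _, hψ.contDiffOn, fun t ht => hψ0 ▸ hmono.monotone ht, fun x _ => rfl⟩
  · exact radialMap_eq_smul (contractionProfile_of_abs_le hδ hδη (by rwa [abs_norm]))
  · have hψx : ψ ‖x‖ = ‖x‖ := contractionProfile_of_le_abs hδ hδη (by rwa [abs_norm])
    rw [radialMap_eq_smul (hψx.trans (one_mul _).symm), one_smul]

/-- For every dimension `d ≥ 1` and all `ε, η > 0` there is `0 < δ < η`, depending only on
`d`, `ε`, `η` (in particular, not on `μ`), such that for every `μ ∈ (0,1]` there is a smooth
diffeomorphism `Ψ` of `ℝ^d` with `Ψ(x) = μ x` for `|x| ≤ δ`, `Ψ(x) = x` for `|x| ≥ η`, and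
`Lip(Ψ) ≤ 1 + ε`; moreover `Ψ` is radial, `Ψ(x) = ψ(|x|) x / |x|` for an increasing smooth
function `ψ : [0,∞) → [0,∞)`. -/
theorem statement2 (d : ℕ) (hd : 1 ≤ d) (ε η : ℝ) (hε : 0 < ε) (hη : 0 < η) :
    ∃ δ : ℝ, 0 < δ ∧ δ < η ∧
      ∀ μ : ℝ, 0 < μ → μ ≤ 1 →
        ∃ (Ψ Φ : EuclideanSpace ℝ (Fin d) → EuclideanSpace ℝ (Fin d)) (ψ : ℝ → ℝ),
          ContDiff ℝ (⊤ : ℕ∞) Ψ ∧ ContDiff ℝ (⊤ : ℕ∞) Φ ∧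
          Function.LeftInverse Φ Ψ ∧ Function.RightInverse Φ Ψ ∧
          (∀ x, ‖x‖ ≤ δ → Ψ x = μ • x) ∧
          (∀ x, η ≤ ‖x‖ → Ψ x = x) ∧
          LipschitzWith (Real.toNNReal (1 + ε)) Ψ ∧
          StrictMonoOn ψ (Set.Ici (0 : ℝ)) ∧
          ContDiffOn ℝ (⊤ : ℕ∞) ψ (Set.Ici (0 : ℝ)) ∧
          (∀ t : ℝ, 0 ≤ t → 0 ≤ ψ t) ∧
          (∀ x, x ≠ 0 → Ψ x = (ψ ‖x‖ / ‖x‖) • x) :=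
  statement2_general ε η hε hη
end

section
/- Every finite polyhedron in ℝ^N admits a finite triangulation: if K ⊂ ℝ^N is the union of finitely many simplices (each being the convex hull of an affinely independent finite set of points), then there exists a finite simplicial complex in ℝ^N whose space equals K. -/
open Set Geometry

/-!
Barycentric coordinates describe every simplex by sign conditions on finitely many affine forms, and
by Carathéodory's theorem a polytope is a finite union of simplices. So there is a finite set `F` of
affine forms such that the polyhedron is a union of sign cells of `F` containing, with each cell,
all of its faces. Choose one point in each cell and span a simplex by every set of chosen points
whose cells form a chain for the face order: a barycentric subdivision of the cell decomposition.

A point in the hull of a chain lies in the same cell as one of the vertices. Hence disjoint chains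
have disjoint hulls, which by Radon's theorem is enough for these simplices to form a complex.
They cover because the polyhedron is bounded: the ray from the chosen point `p` of the cell of `x`
through `x` leaves the polyhedron, so it meets a proper face of that cell; apply induction to the
point reached.
-/

namespace PolyhedralTriangulation

section ConvexGeometry

theorem sum_filter_pos_smul_add_sum_filter_neg_smul {ι R M : Type*} [Semiring R] [LinearOrder R]
    [AddCommMonoid M] [Module R M] (u : Finset ι) (w : ι → R) (z : ι → M) :
    ∑ i ∈ u with 0 < w i, w i • z i + ∑ i ∈ u with w i < 0, w i • z i = ∑ i ∈ u, w i • z i := by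
  rw [Finset.sum_filter, Finset.sum_filter, ← Finset.sum_add_distrib]
  refine Finset.sum_congr rfl fun i _ => ?_
  rcases lt_trichotomy (w i) 0 with h | h | h <;> simp [h, h.not_gt]

variable {𝕜 E : Type*} [Field 𝕜] [LinearOrder 𝕜] [IsStrictOrderedRing 𝕜]
  [AddCommGroup E] [Module 𝕜 E]

theorem mem_convexHull_iff_exists_weights_of_subset {s u : Finset E} (hsu : s ⊆ u) {x : E} :
    x ∈ convexHull 𝕜 (s : Set E) ↔
      ∃ w : E → 𝕜, (∀ p, 0 ≤ w p) ∧ (∀ p ∉ s, w p = 0) ∧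
        ∑ p ∈ u, w p = 1 ∧ ∑ p ∈ u, w p • p = x := by
  classical
  rw [Finset.mem_convexHull']
  constructor
  · rintro ⟨w, hw, hsum, rfl⟩
    refine ⟨fun p => if p ∈ s then w p else 0, fun p => ?_, fun p hp => if_neg hp, ?_, ?_⟩
    · dsimp only
      split_ifs with hp
      exacts [hw p hp, le_rfl]
    · rw [Finset.sum_ite_mem, Finset.inter_eq_right.2 hsu, hsum]
    · simp only [ite_smul, zero_smul, Finset.sum_ite_mem, Finset.inter_eq_right.2 hsu]
  · rintro ⟨w, hw, hzero, hsum, rfl⟩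
    refine ⟨w, fun p _ => hw p, ?_, ?_⟩
    · rw [← hsum, Finset.sum_subset hsu fun p _ hp => hzero p hp]
    · exact Finset.sum_subset hsu fun p _ hp => by rw [hzero p hp, zero_smul]

theorem convexHull_pos_inter_convexHull_neg_nonempty {u : Finset E} {w : E → 𝕜}
    (hsum : ∑ p ∈ u, w p = 0) (hcomb : ∑ p ∈ u, w p • p = 0) (hne : ∃ p ∈ u, w p ≠ 0) :
    (convexHull 𝕜 (u.filter (0 < w ·) : Set E) ∩
      convexHull 𝕜 (u.filter (w · < 0) : Set E)).Nonempty := by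
  have hweights : ∑ p ∈ u with 0 < w p, w p + ∑ p ∈ u with w p < 0, w p = 0 := by
    simpa only [smul_eq_mul, mul_one, hsum] using
      sum_filter_pos_smul_add_sum_filter_neg_smul u w fun _ => (1 : 𝕜)
  have hpos : 0 < ∑ p ∈ u with 0 < w p, w p := by
    obtain ⟨p, hp, hwp⟩ := Finset.exists_pos_of_sum_zero_of_exists_nonzero w hsum hne
    exact Finset.sum_pos (fun q hq => (Finset.mem_filter.1 hq).2)
      ⟨p, Finset.mem_filter.2 ⟨hp, hwp⟩⟩
  have hcenter : (u.filter (0 < w ·)).centerMass w id = (u.filter (w · < 0)).centerMass w id :=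
    Finset.centerMass_of_sum_add_sum_eq_zero hweights
      ((sum_filter_pos_smul_add_sum_filter_neg_smul u w id).trans hcomb)
  refine ⟨_, Finset.centerMass_id_mem_convexHull _ (fun p hp => (Finset.mem_filter.1 hp).2.le) hpos,
    ?_⟩
  rw [hcenter]
  exact Finset.centerMass_id_mem_convexHull_of_nonpos _ (fun p hp => (Finset.mem_filter.1 hp).2.le)
    (by linarith)

theorem convexHull_inter_subset_of_disjoint {s t : Finset E}
    (hdisj : ∀ s' ⊆ s, ∀ t' ⊆ t, Disjoint s' t' →
      Disjoint (convexHull 𝕜 (s' : Set E)) (convexHull 𝕜 (t' : Set E))) :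
    convexHull 𝕜 (s : Set E) ∩ convexHull 𝕜 (t : Set E) ⊆ convexHull 𝕜 (s ∩ t : Set E) := by
  classical
  rintro x ⟨hxs, hxt⟩
  obtain ⟨a, ha, ha_zero, ha_sum, hax⟩ :=
    (mem_convexHull_iff_exists_weights_of_subset (u := s ∪ t) Finset.subset_union_left).1 hxs
  obtain ⟨b, hb, hb_zero, hb_sum, hbx⟩ :=
    (mem_convexHull_iff_exists_weights_of_subset (u := s ∪ t) Finset.subset_union_right).1 hxt
  have hab : ∀ p ∈ s ∪ t, a p - b p = 0 := by
    by_contra! hne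
    refine not_disjoint_iff_nonempty_inter.2
      (convexHull_pos_inter_convexHull_neg_nonempty ?_ ?_ hne) (hdisj _ (fun p hp => ?_) _
        (fun p hp => ?_) (Finset.disjoint_filter.2 fun p _ hpos hneg => lt_asymm hpos hneg))
    · rw [Finset.sum_sub_distrib, ha_sum, hb_sum, sub_self]
    · simp only [sub_smul, Finset.sum_sub_distrib, hax, hbx, sub_self]
    · by_contra hps
      linarith [(Finset.mem_filter.1 hp).2, ha_zero p hps, hb p]
    · by_contra hpt
      linarith [(Finset.mem_filter.1 hp).2, hb_zero p hpt, ha p]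
  rw [← Finset.coe_inter, mem_convexHull_iff_exists_weights_of_subset
    (Finset.inter_subset_left.trans Finset.subset_union_left : s ∩ t ⊆ s ∪ t)]
  refine ⟨a, ha, fun p hp => ?_, ha_sum, hax⟩
  by_contra hap
  have hps : p ∈ s := not_imp_comm.1 (ha_zero p) hap
  have hpt : p ∈ t := not_imp_comm.1 (hb_zero p) fun hbp =>
    hap (by simpa [hbp] using hab p (Finset.mem_union_left t hps))
  exact hp (Finset.mem_inter.2 ⟨hps, hpt⟩)

theorem affineIndependent_of_disjoint {s : Finset E}
    (hdisj : ∀ t ⊆ s, ∀ u ⊆ s, Disjoint t u →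
      Disjoint (convexHull 𝕜 (t : Set E)) (convexHull 𝕜 (u : Set E))) :
    AffineIndependent 𝕜 ((↑) : s → E) := by
  by_contra hs
  obtain ⟨I, hI⟩ := Convex.radon_partition hs
  have hsub (J : Set s) : (toFinite ((↑) '' J : Set E)).toFinset ⊆ s := by
    rw [Finite.toFinset_subset]
    exact image_subset_iff.2 fun p _ => p.2
  refine not_disjoint_iff_nonempty_inter.2 hI ?_
  simpa only [Finite.coe_toFinset] using hdisj _ (hsub I) _ (hsub Iᶜ)
    (Finite.disjoint_toFinset.2 (disjoint_image_of_injective Subtype.val_injective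
      disjoint_compl_right))

/-- The simplicial complex whose faces are the nonempty members of a family of finite sets, closed
under passing to subsets, in which disjoint members have disjoint convex hulls. -/
def complexOfDisjoint (faces : Set (Finset E)) (hlower : IsLowerSet faces)
    (hdisj : ∀ s ∈ faces, ∀ t ∈ faces, Disjoint s t →
      Disjoint (convexHull 𝕜 (s : Set E)) (convexHull 𝕜 (t : Set E))) :
    SimplicialComplex 𝕜 E :=
  .ofErase faces
    (fun _ hs => affineIndependent_of_disjoint fun _ ht _ hu =>
      hdisj _ (hlower ht hs) _ (hlower hu hs))
    hlower
    (fun _ hs _ ht => convexHull_inter_subset_of_disjoint fun _ hs' _ ht' =>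
      hdisj _ (hlower hs' hs) _ (hlower ht' ht))

theorem space_complexOfDisjoint {faces : Set (Finset E)} (hlower : IsLowerSet faces)
    (hdisj : ∀ s ∈ faces, ∀ t ∈ faces, Disjoint s t →
      Disjoint (convexHull 𝕜 (s : Set E)) (convexHull 𝕜 (t : Set E))) :
    (complexOfDisjoint faces hlower hdisj).space = ⋃ s ∈ faces, convexHull 𝕜 (s : Set E) := by
  ext x
  simp only [SimplicialComplex.mem_space_iff, complexOfDisjoint, SimplicialComplex.ofErase_faces,
    mem_iUnion, exists_prop]
  refine ⟨fun ⟨s, hs, hx⟩ => ⟨s, hs.1, hx⟩, fun ⟨s, hs, hx⟩ => ⟨s, ⟨hs, ?_⟩, hx⟩⟩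
  rintro rfl
  simp at hx

end ConvexGeometry

/-- Sign vectors with the face order: `σ ≤ τ` when `σ` arises from `τ` by replacing some entries
by `0`, that is, when the cell of `σ` lies in the closure of the cell of `τ`. The synonym keeps this
order apart from the entrywise order on functions to `SignType`. -/
def SignVector (ι : Type*) : Type _ := ι → SignType

namespace SignVector

variable {ι : Type*}

instance : PartialOrder (SignVector ι) where
  le σ τ := ∀ i, σ i = 0 ∨ σ i = τ i
  le_refl _ _ := Or.inr rfl
  le_trans σ τ ρ hστ hτρ i := by
    rcases hστ i with h | h
    · exact Or.inl h
    · exact h ▸ hτρ i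
  le_antisymm σ τ hστ hτσ := funext fun i => by
    rcases hστ i with h | h
    · rcases hτσ i with h' | h'
      exacts [h.trans h'.symm, h'.symm]
    · exact h

instance [Finite ι] : Finite (SignVector ι) := inferInstanceAs (Finite (ι → SignType))

end SignVector

section Signs

variable {𝕜 : Type*} [Field 𝕜] {u v a b t : 𝕜}

theorem lineMap_eq_mul_one_sub (hu : u ≠ 0) :
    AffineMap.lineMap u v t = u * (1 - t * (1 - v / u)) := by
  rw [AffineMap.lineMap_apply_ring]
  field_simp
  ring

variable [LinearOrder 𝕜] [IsStrictOrderedRing 𝕜]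

theorem sign_combo_eq_right (h : u = 0 ∨ SignType.sign u = SignType.sign v)
    (ha : 0 ≤ a) (hb : 0 < b) : SignType.sign (a * u + b * v) = SignType.sign v := by
  rcases h with rfl | h
  · rw [mul_zero, zero_add, sign_mul, sign_pos hb, one_mul]
  rcases lt_trichotomy v 0 with hv | rfl | hv
  · rw [sign_neg hv, sign_eq_neg_one_iff] at h
    rw [sign_neg hv, sign_neg (by nlinarith)]
  · rw [sign_zero, sign_eq_zero_iff] at h
    rw [h, mul_zero, mul_zero, add_zero]
  · rw [sign_pos hv, sign_eq_one_iff] at h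
    rw [sign_pos hv, sign_pos (by positivity)]

theorem div_nonpos_of_sign_ne (h : SignType.sign v ≠ SignType.sign u) : v / u ≤ 0 := by
  by_contra! hpos
  have hu : u ≠ 0 := by
    rintro rfl
    simp at hpos
  exact h (by rw [← div_mul_cancel₀ v hu, sign_mul, sign_pos hpos, one_mul])

-- `(1 - v / u)⁻¹` is the parameter at which the segment from `u` to `v` passes through `0`.
theorem lineMap_eq_zero_or_sign_eq (hu : u ≠ 0) (hv : SignType.sign v ≠ SignType.sign u)
    (ht : t ≤ (1 - v / u)⁻¹) :
    AffineMap.lineMap u v t = 0 ∨ SignType.sign (AffineMap.lineMap u v t) = SignType.sign u := by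
  have hslope : 0 < 1 - v / u := by linarith [div_nonpos_of_sign_ne hv]
  have hfactor : 0 ≤ 1 - t * (1 - v / u) :=
    sub_nonneg.2 ((le_div_iff₀ hslope).1 (ht.trans_eq (one_div _).symm))
  rw [lineMap_eq_mul_one_sub hu]
  rcases hfactor.eq_or_lt with h | h
  · exact Or.inl (by rw [← h, mul_zero])
  · exact Or.inr (by rw [sign_mul, sign_pos h, mul_one])

end Signs

section Arrangement

variable {𝕜 E : Type*} [Field 𝕜] [LinearOrder 𝕜] [AddCommGroup E] [Module 𝕜 E]

/-- The signs at `x` of the affine forms in `F`. Its fibres are the open cells of the arrangement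
of hyperplanes cut out by `F`. -/
def signVector (F : Set (E →ᵃ[𝕜] 𝕜)) (x : E) : SignVector F := fun f => SignType.sign (f.1 x)

/-- `K` is a union of cells of the arrangement `F` and contains the faces of its cells. -/
def IsCellular (F : Set (E →ᵃ[𝕜] 𝕜)) (K : Set E) : Prop :=
  ∀ ⦃x y⦄, signVector F y ≤ signVector F x → x ∈ K → y ∈ K

variable {F G : Set (E →ᵃ[𝕜] 𝕜)} {K V s : Set E} {x y z p : E}

theorem signVector_le_iff :
    signVector F x ≤ signVector F y ↔
      ∀ f ∈ F, f x = 0 ∨ SignType.sign (f x) = SignType.sign (f y) :=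
  Subtype.forall.trans (forall₂_congr fun _ _ => or_congr_left sign_eq_zero_iff)

theorem signVector_eq_iff :
    signVector F x = signVector F y ↔ ∀ f ∈ F, SignType.sign (f x) = SignType.sign (f y) :=
  funext_iff.trans Subtype.forall

theorem IsCellular.mono (hFG : F ⊆ G) (hK : IsCellular F K) : IsCellular G K :=
  fun _ _ hyx hx => hK (signVector_le_iff.2 fun f hf => signVector_le_iff.1 hyx f (hFG hf)) hx

theorem IsCellular.iUnion {ι : Type*} {F : ι → Set (E →ᵃ[𝕜] 𝕜)} {K : ι → Set E}
    (hK : ∀ i, IsCellular (F i) (K i)) : IsCellular (⋃ i, F i) (⋃ i, K i) := by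
  intro x y hyx hx
  obtain ⟨i, hxi⟩ := mem_iUnion.1 hx
  exact mem_iUnion.2 ⟨i, (hK i).mono (subset_iUnion F i) hyx hxi⟩

theorem exists_isCellular_iUnion {ι : Type*} [Finite ι] {K : ι → Set E}
    (hK : ∀ i, ∃ F : Set (E →ᵃ[𝕜] 𝕜), F.Finite ∧ IsCellular F (K i)) :
    ∃ F : Set (E →ᵃ[𝕜] 𝕜), F.Finite ∧ IsCellular F (⋃ i, K i) := by
  choose F hF hFK using hK
  exact ⟨⋃ i, F i, finite_iUnion hF, .iUnion hFK⟩

variable [IsStrictOrderedRing 𝕜]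

theorem signVector_combo_eq_right (h : signVector F x ≤ signVector F y) {a b : 𝕜} (ha : 0 ≤ a)
    (hb : 0 < b) (hab : a + b = 1) : signVector F (a • x + b • y) = signVector F y :=
  signVector_eq_iff.2 fun f hf => by
    rw [Convex.combo_affine_apply hab]
    exact sign_combo_eq_right (signVector_le_iff.1 h f hf) ha hb

theorem exists_signVector_eq_of_mem_convexHull (hs : IsChain (signVector F ⁻¹'o (· ≤ ·)) s)
    (hx : x ∈ convexHull 𝕜 s) : ∃ p ∈ s, signVector F x = signVector F p := by
  refine convexHull_min (t := {x | ∃ p ∈ s, signVector F x = signVector F p})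
    (fun p hp => ⟨p, hp, rfl⟩) (convex_iff_forall_pos.2 ?_) hx
  rintro x ⟨p, hp, hxp⟩ y ⟨q, hq, hyq⟩ a b ha hb hab
  rcases hs.total hp hq with hpq | hqp
  · exact ⟨q, hq, (signVector_combo_eq_right (hxp.trans_le (hpq.trans_eq hyq.symm)) ha.le hb
      hab).trans hyq⟩
  · refine ⟨p, hp, ?_⟩
    rw [add_comm, signVector_combo_eq_right (hyq.trans_le (hqp.trans_eq hxp.symm)) hb.le ha
      (by rwa [add_comm]), hxp]

/-- The complex with vertex set `V` whose faces are the finite sets of vertices lying in cells that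
form a chain for the face order. -/
def orderComplex (hV : InjOn (signVector F) V) : SimplicialComplex 𝕜 E :=
  complexOfDisjoint {s | ↑s ⊆ V ∧ IsChain (signVector F ⁻¹'o (· ≤ ·)) (s : Set E)}
    (fun _ _ hts hs => ⟨(Finset.coe_subset.2 hts).trans hs.1, hs.2.mono hts⟩)
    (fun s hs t ht hst => disjoint_left.2 fun x hxs hxt => by
      obtain ⟨p, hp, hxp⟩ := exists_signVector_eq_of_mem_convexHull hs.2 hxs
      obtain ⟨q, hq, hxq⟩ := exists_signVector_eq_of_mem_convexHull ht.2 hxt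
      obtain rfl : p = q := hV (hs.1 hp) (ht.1 hq) (hxp.symm.trans hxq)
      exact Finset.disjoint_left.1 hst hp hq)

theorem mem_space_orderComplex_iff (hV : InjOn (signVector F) V) :
    x ∈ (orderComplex hV).space ↔
      ∃ s : Finset E, (↑s ⊆ V ∧ IsChain (signVector F ⁻¹'o (· ≤ ·)) (s : Set E)) ∧
        x ∈ convexHull 𝕜 (s : Set E) := by
  refine (Set.ext_iff.1 (space_complexOfDisjoint _ _) x).trans ?_
  simp only [mem_iUnion, exists_prop, mem_ofPred_eq]

theorem finite_faces_orderComplex (hV : InjOn (signVector F) V) (hfin : V.Finite) :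
    (orderComplex hV).faces.Finite := by
  refine (hfin.toFinset.powerset.finite_toSet).subset fun s hs => ?_
  simpa using hs.1.1

theorem exists_wbtw_signVector_lt [Finite F] (hzero : ∀ f ∈ F, f x = 0 → f z = 0)
    (hne : signVector F z ≠ signVector F x) :
    ∃ y, Wbtw 𝕜 x y z ∧ signVector F y < signVector F x := by
  have hx0 {f} (hf : f ∈ F) (hs : SignType.sign (f z) ≠ SignType.sign (f x)) : f x ≠ 0 :=
    fun h0 => hs (by rw [h0, hzero f hf h0])
  have hchange : {f ∈ F | SignType.sign (f z) ≠ SignType.sign (f x)}.Nonempty := by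
    contrapose! hne
    exact signVector_eq_iff.2 fun f hf => not_not.1 fun hs => hne.subset ⟨hf, hs⟩
  obtain ⟨f₀, ⟨hf₀, hs₀⟩, hmin⟩ := exists_min_image _ (fun f => (1 - f z / f x)⁻¹)
    ((toFinite F).subset (sep_subset _ _)) hchange
  have hslope : 1 ≤ 1 - f₀ z / f₀ x := by linarith [div_nonpos_of_sign_ne hs₀]
  set t := (1 - f₀ z / f₀ x)⁻¹
  have ht : 0 < t := inv_pos.2 (zero_lt_one.trans_le hslope)
  have ht1 : t ≤ 1 := inv_le_one_of_one_le₀ hslope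
  have hle : signVector F (AffineMap.lineMap x z t) ≤ signVector F x :=
    signVector_le_iff.2 fun f hf => by
      rw [f.apply_lineMap]
      by_cases hs : SignType.sign (f z) = SignType.sign (f x)
      · rw [AffineMap.lineMap_apply_ring, sign_combo_eq_right (.inr hs.symm) (sub_nonneg.2 ht1) ht]
        exact .inr hs
      · exact lineMap_eq_zero_or_sign_eq (hx0 hf hs) hs (hmin f ⟨hf, hs⟩)
  refine ⟨_, ⟨t, ⟨ht.le, ht1⟩, rfl⟩, hle.lt_of_ne fun heq => hx0 hf₀ hs₀ ?_⟩
  have hroot : f₀ (AffineMap.lineMap x z t) = 0 := by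
    rw [f₀.apply_lineMap, lineMap_eq_mul_one_sub (hx0 hf₀ hs₀),
      inv_mul_cancel₀ (zero_lt_one.trans_le hslope).ne', sub_self, mul_zero]
  rw [← sign_eq_zero_iff, ← signVector_eq_iff.1 heq f₀ hf₀, hroot, sign_zero]

theorem exists_wbtw_notMem (hbdd : ∀ g : Module.Dual 𝕜 E, BddAbove (g '' K)) (hpx : p ≠ x) :
    ∃ z ∉ K, Wbtw 𝕜 p x z := by
  obtain ⟨g, hg⟩ := Module.Projective.exists_dual_eq_one 𝕜 (sub_ne_zero.2 hpx.symm)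
  obtain ⟨M, hM⟩ := hbdd g
  set r := max 1 (M - g p + 1)
  refine ⟨AffineMap.lineMap p x r, fun hz => ?_,
    wbtw_iff_left_eq_or_right_mem_image_Ici.2 (.inr ⟨r, le_max_left _ _, rfl⟩)⟩
  have hvalue : g (AffineMap.lineMap p x r) = r + g p := by
    simp only [AffineMap.lineMap_apply_module', map_add, map_smul, hg, smul_eq_mul, mul_one]
  linarith [hM (mem_image_of_mem g hz), le_max_right 1 (M - g p + 1)]

theorem eq_zero_of_wbtw (f : E →ᵃ[𝕜] 𝕜) (h : Wbtw 𝕜 p x z) (hpx : p ≠ x) (hp : f p = 0)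
    (hx : f x = 0) : f z = 0 := by
  obtain ⟨t, -, rfl⟩ := h
  rw [f.apply_lineMap, hp, AffineMap.lineMap_apply_ring, mul_zero, zero_add] at hx
  exact (mul_eq_zero.1 hx).resolve_left fun ht => hpx (by rw [ht, AffineMap.lineMap_apply_zero])

theorem exists_chain_mem_convexHull [Finite F] (hK : IsCellular F K)
    (hbdd : ∀ g : Module.Dual 𝕜 E, BddAbove (g '' K))
    (hV : ∀ x ∈ K, ∃ p ∈ V, signVector F p = signVector F x) (hx : x ∈ K) :
    ∃ s : Finset E, ↑s ⊆ V ∧ IsChain (signVector F ⁻¹'o (· ≤ ·)) (s : Set E) ∧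
      (∀ q ∈ s, signVector F q ≤ signVector F x) ∧ x ∈ convexHull 𝕜 (s : Set E) := by
  classical
  induction hσ : signVector F x using WellFoundedLT.induction generalizing x with
  | ind σ ih =>
  subst hσ
  obtain ⟨p, hpV, hpx⟩ := hV x hx
  obtain rfl | hne := eq_or_ne p x
  · exact ⟨{p}, by simpa using hpV, by simp, by simp, by simp⟩
  obtain ⟨z, hzK, hpxz⟩ := exists_wbtw_notMem hbdd hne
  have hzero : ∀ f ∈ F, f x = 0 → f z = 0 := fun f hf hfx =>
    eq_zero_of_wbtw f hpxz hne
      (sign_eq_zero_iff.1 ((signVector_eq_iff.1 hpx f hf).trans (sign_eq_zero_iff.2 hfx))) hfx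
  obtain ⟨y, hxyz, hyx⟩ := exists_wbtw_signVector_lt hzero fun hzx => hzK (hK hzx.le hx)
  obtain ⟨s, hsV, hs, hsy, hys⟩ := ih _ hyx (hK hyx.le hx) rfl
  have hsx : ∀ q ∈ s, signVector F q ≤ signVector F x := fun q hq => (hsy q hq).trans hyx.le
  refine ⟨insert p s, ?_, ?_, ?_, ?_⟩
  · rw [Finset.coe_insert]
    exact insert_subset hpV hsV
  · rw [Finset.coe_insert]
    exact hs.insert fun q hq _ => .inr ((hsx q hq).trans_eq hpx.symm)
  · exact Finset.forall_mem_insert _ _ _ |>.2 ⟨hpx.le, hsx⟩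
  · rw [Finset.coe_insert]
    exact (convex_convexHull 𝕜 _).mem_of_wbtw (hpxz.trans_right_left hxyz)
      (subset_convexHull 𝕜 _ (mem_insert _ _)) (convexHull_mono (subset_insert _ _) hys)

theorem exists_simplicialComplex_of_isCellular [Finite F] (hK : IsCellular F K)
    (hbdd : ∀ g : Module.Dual 𝕜 E, BddAbove (g '' K)) :
    ∃ C : SimplicialComplex 𝕜 E, C.faces.Finite ∧ C.space = K := by
  obtain ⟨V, hVK, hV⟩ := exists_subset_bijOn K (signVector F)
  refine ⟨orderComplex hV.injOn,
    finite_faces_orderComplex hV.injOn (.of_finite_image (toFinite _) hV.injOn), ?_⟩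
  ext x
  rw [mem_space_orderComplex_iff]
  constructor
  · rintro ⟨s, ⟨hsV, hs⟩, hx⟩
    obtain ⟨p, hp, hxp⟩ := exists_signVector_eq_of_mem_convexHull hs hx
    exact hK hxp.le (hVK (hsV hp))
  · intro hx
    obtain ⟨s, hsV, hs, -, hxs⟩ := exists_chain_mem_convexHull hK hbdd
      (fun y hy => hV.surjOn (mem_image_of_mem _ hy)) hx
    exact ⟨s, ⟨hsV, hs⟩, hxs⟩

end Arrangement

section Polyhedra

variable {𝕜 E ι : Type*} [Field 𝕜] [LinearOrder 𝕜] [IsStrictOrderedRing 𝕜]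
  [AddCommGroup E] [Module 𝕜 E]

theorem convexHull_image_eq_nonneg_coord [Finite ι] (b : AffineBasis ι 𝕜 E) (I : Set ι) :
    convexHull 𝕜 (b '' I) = {x | (∀ i, 0 ≤ b.coord i x) ∧ ∀ i ∉ I, b.coord i x = 0} := by
  classical
  cases nonempty_fintype ι
  refine Subset.antisymm (fun x hx => ⟨?_, fun i hi => ?_⟩) fun x ⟨hpos, hzero⟩ => ?_
  · have hrange : x ∈ convexHull 𝕜 (range b) := convexHull_mono (image_subset_range _ _) hx
    rwa [b.convexHull_eq_nonneg_coord] at hrange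
  · refine convexHull_min (image_subset_iff.2 fun j hj => ?_)
      ((convex_singleton 0).affine_preimage (b.coord i)) hx
    exact b.coord_apply_ne fun hij => hi (hij ▸ hj)
  · have hsum : ∑ i with i ∈ I, b.coord i x = 1 := by
      rw [Finset.sum_filter_of_ne fun i _ hi => not_imp_comm.1 (hzero i) hi,
        b.sum_coord_apply_eq_one]
    have hcomb : ∑ i with i ∈ I, b.coord i x • b i = x := by
      rw [Finset.sum_filter_of_ne fun i _ hi => not_imp_comm.1 (hzero i) (left_ne_zero_of_smul hi),
        b.linear_combination_coord_eq_self]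
    rw [← hcomb]
    exact (convex_convexHull 𝕜 _).sum_mem (fun i _ => hpos i) hsum fun i hi =>
      subset_convexHull 𝕜 _ (mem_image_of_mem b (Finset.mem_filter.1 hi).2)

theorem isCellular_convexHull_image [Finite ι] (b : AffineBasis ι 𝕜 E) (I : Set ι) :
    IsCellular (range b.coord) (convexHull 𝕜 (b '' I)) := by
  rw [convexHull_image_eq_nonneg_coord]
  rintro x y hyx ⟨hpos, hzero⟩
  have hcoord (i : ι) := signVector_le_iff.1 hyx (b.coord i) (mem_range_self i)
  refine ⟨fun i => ?_, fun i hi => ?_⟩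
  · rcases hcoord i with h | h
    · exact h.ge
    · exact sign_nonneg_iff.1 (h ▸ sign_nonneg_iff.2 (hpos i))
  · rcases hcoord i with h | h
    · exact h
    · rwa [hzero i hi, sign_zero, sign_eq_zero_iff] at h

theorem bddAbove_image_convexHull {s : Set E} (hs : s.Finite) (g : Module.Dual 𝕜 E) :
    BddAbove (g '' convexHull 𝕜 s) := by
  obtain ⟨M, hM⟩ := (hs.image g).bddAbove
  rw [LinearMap.image_convexHull]
  exact ⟨M, convexHull_min hM (convex_Iic M)⟩

variable [FiniteDimensional 𝕜 E]

theorem exists_isCellular_convexHull_of_affineIndependent {s : Set E}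
    (hs : AffineIndependent 𝕜 ((↑) : s → E)) :
    ∃ F : Set (E →ᵃ[𝕜] 𝕜), F.Finite ∧ IsCellular F (convexHull 𝕜 s) := by
  obtain ⟨t, hst, hind, hspan⟩ := exists_subset_affineIndependent_affineSpan_eq_top hs
  let b : AffineBasis t 𝕜 E := ⟨(↑), hind, by rwa [Subtype.range_coe]⟩
  have : Finite t := b.finite
  have himage : b '' ((↑) ⁻¹' s) = s :=
    (Subtype.image_preimage_coe t s).trans (inter_eq_right.2 hst)
  exact ⟨range b.coord, finite_range _, himage ▸ isCellular_convexHull_image b ((↑) ⁻¹' s)⟩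

theorem exists_isCellular_convexHull (s : Finset E) :
    ∃ F : Set (E →ᵃ[𝕜] 𝕜), F.Finite ∧ IsCellular F (convexHull 𝕜 (s : Set E)) := by
  let T := {t : Finset E // t ⊆ s ∧ AffineIndependent 𝕜 ((↑) : t → E)}
  have : Finite T := (s.powerset.finite_toSet.subset fun t ht => Finset.mem_powerset.2 ht.1)
  have hunion : convexHull 𝕜 (s : Set E) = ⋃ t : T, convexHull 𝕜 (t.1 : Set E) := by
    rw [convexHull_eq_union, iUnion_subtype]
    simp only [Finset.coe_subset, iUnion_and]
  rw [hunion]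
  exact exists_isCellular_iUnion fun t => exists_isCellular_convexHull_of_affineIndependent t.2.2

end Polyhedra

end PolyhedralTriangulation

open PolyhedralTriangulation in
theorem statement4_general {𝕜 E ι : Type*} [Field 𝕜] [LinearOrder 𝕜] [IsStrictOrderedRing 𝕜]
    [AddCommGroup E] [Module 𝕜 E] [FiniteDimensional 𝕜 E] [Finite ι] (s : ι → Finset E) :
    ∃ K : SimplicialComplex 𝕜 E,
      K.faces.Finite ∧ K.space = ⋃ i, convexHull 𝕜 (s i : Set E) := by
  obtain ⟨F, hF, hcell⟩ := exists_isCellular_iUnion fun i =>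
    exists_isCellular_convexHull (𝕜 := 𝕜) (s i)
  have : Finite F := hF
  refine exists_simplicialComplex_of_isCellular hcell fun g => ?_
  have hfin : (⋃ i, (s i : Set E)).Finite := finite_iUnion fun i => (s i).finite_toSet
  exact (bddAbove_image_convexHull hfin g).mono
    (image_mono (iUnion_subset fun i => convexHull_mono (subset_iUnion (fun i => (s i : Set E)) i)))

/-- Every finite polyhedron in `ℝ^N` — a union of finitely many simplices, each the convex hull
of an affinely independent finite set — is the space of some finite simplicial complex. -/
theorem statement4 (N k : ℕ) (s : Fin k → Finset (EuclideanSpace ℝ (Fin N)))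
    (hind : ∀ i, AffineIndependent ℝ ((↑) : ↥(s i) → EuclideanSpace ℝ (Fin N))) :
    ∃ K : SimplicialComplex ℝ (EuclideanSpace ℝ (Fin N)),
      K.faces.Finite ∧
      K.space = ⋃ i, convexHull ℝ (s i : Set (EuclideanSpace ℝ (Fin N))) :=
  statement4_general s
end

section
/- Every compact convex polytope admits a triangulation: for every finite set S ⊂ ℝ^N there exists a finite simplicial complex in ℝ^N whose space equals the convex hull of S. -/
open Set Geometry

/-!
Fix a linear order on the points. A point of the hull may be a convex combination of `S` in many
ways; select the one whose weights are lexicographically smallest. Whether nonnegative weights `w`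
are selected depends only on their support: any `u ≥ 0` supported in the support of `w` becomes,
after scaling, a summand of `w`, and improving a summand improves the whole. So the supports of the
selected weights form a complex: uniqueness of the selection makes two simplices meet in the hull of
their common vertices, and its existence makes them cover the polytope. The
selection exists because weights with dependent support can be decreased along a relation until
some entry vanishes, while each independent support carries at most one solution.

Convex combinations of points `x` are treated as conic combinations of the vectors `(1, x)`.
-/

namespace LexTriangulation

open Finsupp (supported linearCombination supported_mono)

section Homogenize

/-- The lift of a point to height `1`, which turns affine combinations of points into linear
combinations of vectors. -/
def homogenize (𝕜 : Type*) {E : Type*} [One 𝕜] (x : E) : 𝕜 × E := (1, x)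

variable {𝕜 ι E : Type*} [Ring 𝕜] [AddCommGroup E] [Module 𝕜 E]

lemma sum_smul_homogenize (t : Finset ι) (w : ι → 𝕜) (p : ι → E) :
    ∑ i ∈ t, w i • homogenize 𝕜 (p i) = (∑ i ∈ t, w i, ∑ i ∈ t, w i • p i) := by
  simp [homogenize, Prod.ext_iff, Prod.fst_sum, Prod.snd_sum]

lemma linearIndependent_homogenize_iff {p : ι → E} :
    LinearIndependent 𝕜 (fun i ↦ homogenize 𝕜 (p i)) ↔ AffineIndependent 𝕜 p := by
  simp only [linearIndependent_iff', affineIndependent_iff, sum_smul_homogenize,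
    Prod.mk_eq_zero, and_imp]

end Homogenize

section Lex

variable {𝕜 ι M : Type*} [LinearOrder ι] [PartialOrder M]

lemma exists_pos_of_toLex_pos [Zero M] {d : ι →₀ M} (hd : 0 < toLex d) : ∃ i, 0 < d i := by
  obtain ⟨i, -, hi⟩ := Finsupp.Lex.lt_iff.1 hd
  exact ⟨i, hi⟩

instance posSMulStrictMono_lex_finsupp [Semiring 𝕜] [PartialOrder 𝕜] [AddCommMonoid M]
    [Module 𝕜 M] [PosSMulStrictMono 𝕜 M] : PosSMulStrictMono 𝕜 (Lex (ι →₀ M)) where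
  smul_lt_smul_of_pos_left := by
    rintro c hc a b ⟨i, heq, hlt⟩
    exact ⟨i, fun j hj ↦ congrArg (c • ·) (heq j hj), smul_lt_smul_of_pos_left hlt hc⟩

end Lex

variable {𝕜 ι V E : Type*} [Field 𝕜] [LinearOrder 𝕜]

section ConicWeights

variable [AddCommGroup V] [Module 𝕜 V] {v : ι → V} {p : V}

variable (𝕜) in
/-- The ways to write `p` as a conic combination of the vectors `v i` with `i ∈ s`, each recorded by
its weights. -/
def conicWeights (v : ι → V) (s : Set ι) (p : V) : Set (ι →₀ 𝕜) :=
  {w | 0 ≤ w ∧ w ∈ supported 𝕜 𝕜 s ∧ linearCombination 𝕜 v w = p}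

lemma finite_conicWeights_linearIndepOn_support {s : Finset ι} :
    {w ∈ conicWeights 𝕜 v s p | LinearIndepOn 𝕜 v (w.support : Set ι)}.Finite := by
  refine Set.Finite.of_finite_image (f := Finsupp.support) ?_ ?_
  · refine s.powerset.finite_toSet.subset ?_
    rintro _ ⟨w, ⟨hw, -⟩, rfl⟩
    exact Finset.mem_powerset.2 (Finset.coe_subset.1 hw.2.1)
  · rintro u ⟨hu, hu_indep⟩ w ⟨hw, -⟩ hsupp
    exact linearIndepOn_iffₛ.1 hu_indep u (Finsupp.mem_supported_support 𝕜 u) w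
      (Finset.coe_subset.2 hsupp.ge) (hu.2.2.trans hw.2.2.symm)

variable [IsStrictOrderedRing 𝕜] {s : Set ι} {w d : ι →₀ 𝕜} {c : 𝕜}

lemma sub_smul_mem_conicWeights (hw : w ∈ conicWeights 𝕜 v s p) (hd : d ∈ supported 𝕜 𝕜 s)
    (hd_zero : linearCombination 𝕜 v d = 0) (hle : c • d ≤ w) :
    w - c • d ∈ conicWeights 𝕜 v s p :=
  ⟨sub_nonneg.2 hle, sub_mem hw.2.1 (Submodule.smul_mem _ c hd), by
    rw [map_sub, map_smul, hd_zero, smul_zero, sub_zero, hw.2.2]⟩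

lemma mem_convexHull_iff_nonempty_conicWeights [AddCommGroup E] [Module 𝕜 E] {t : Finset E}
    {x : E} :
    x ∈ convexHull 𝕜 (t : Set E) ↔ (conicWeights 𝕜 (homogenize 𝕜) (t : Set E) (1, x)).Nonempty := by
  rw [Finset.mem_convexHull']
  constructor
  · rintro ⟨w, hw, hsum, hx⟩
    let w' : E →₀ 𝕜 := Finsupp.indicator t fun y _ ↦ w y
    have hw'_supp : w' ∈ supported 𝕜 𝕜 (t : Set E) :=
      Finset.coe_subset.2 (Finsupp.support_indicator_subset t _)
    have hw'_apply : ∀ y ∈ t, w' y = w y := fun y hy ↦ Finsupp.indicator_of_mem hy _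
    refine ⟨w', fun y ↦ ?_, hw'_supp, ?_⟩
    · by_cases hy : y ∈ t
      · exact (hw y hy).trans_eq (hw'_apply y hy).symm
      · exact (Finsupp.indicator_of_notMem hy _).ge
    · rw [Finsupp.linearCombination_apply_of_mem_supported 𝕜 hw'_supp,
        Finset.sum_congr rfl fun y hy ↦ congrArg (· • homogenize 𝕜 y) (hw'_apply y hy),
        sum_smul_homogenize t w fun y ↦ y, hsum, hx]
  · rintro ⟨w, hw, hsupp, hx⟩
    rw [Finsupp.linearCombination_apply_of_mem_supported 𝕜 hsupp,
      sum_smul_homogenize t w fun y ↦ y, Prod.mk_inj] at hx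
    exact ⟨w, fun y _ ↦ hw y, hx⟩

end ConicWeights

section Scaling

variable [IsStrictOrderedRing 𝕜] {w d : ι →₀ 𝕜}

lemma exists_pos_smul_le_and_mul_eq (hw : 0 ≤ w) (hd : d ∈ supported 𝕜 𝕜 (w.support : Set ι))
    (hd_pos : ∃ i, 0 < d i) : ∃ c : 𝕜, 0 < c ∧ c • d ≤ w ∧ ∃ i ∈ w.support, c * d i = w i := by
  have mem_support {i : ι} (hi : 0 < d i) : i ∈ w.support :=
    hd (Finsupp.mem_support_iff.2 hi.ne')
  obtain ⟨i₀, hi₀⟩ := hd_pos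
  obtain ⟨i, hi, hmin⟩ := Finset.exists_min_image {i ∈ w.support | 0 < d i} (fun i ↦ w i / d i)
    ⟨i₀, Finset.mem_filter.2 ⟨mem_support hi₀, hi₀⟩⟩
  obtain ⟨hiw, hid⟩ := Finset.mem_filter.1 hi
  have ratio_pos : 0 < w i / d i :=
    div_pos ((hw i).lt_of_ne' (Finsupp.mem_support_iff.1 hiw)) hid
  refine ⟨w i / d i, ratio_pos, fun j ↦ ?_, i, hiw, div_mul_cancel₀ _ hid.ne'⟩
  rw [Finsupp.smul_apply, smul_eq_mul]
  rcases le_or_gt (d j) 0 with hj | hj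
  · exact (mul_nonpos_of_nonneg_of_nonpos ratio_pos.le hj).trans (hw j)
  · exact (le_div_iff₀ hj).1 (hmin j (Finset.mem_filter.2 ⟨mem_support hj, hj⟩))

lemma exists_pos_smul_le (hw : 0 ≤ w) (hd : d ∈ supported 𝕜 𝕜 (w.support : Set ι)) :
    ∃ c : 𝕜, 0 < c ∧ c • d ≤ w := by
  by_cases hd_pos : ∃ i, 0 < d i
  · obtain ⟨c, hc, hle, -⟩ := exists_pos_smul_le_and_mul_eq hw hd hd_pos
    exact ⟨c, hc, hle⟩
  · push Not at hd_pos
    exact ⟨1, one_pos, fun i ↦ by simpa using (hd_pos i).trans (hw i)⟩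

end Scaling

section IsLexMin

variable [AddCommGroup V] [Module 𝕜 V] [LinearOrder ι] {v : ι → V} {s : Set ι} {u w d : ι →₀ 𝕜}
  {p : V}

/-- The weights `w` are lexicographically smallest among all weights on `s` with the same conic
combination of the vectors `v i`. -/
structure IsLexMin (v : ι → V) (s : Set ι) (w : ι →₀ 𝕜) : Prop where
  mem_conicWeights : w ∈ conicWeights 𝕜 v s (linearCombination 𝕜 v w)
  le : ∀ u ∈ conicWeights 𝕜 v s (linearCombination 𝕜 v w), toLex w ≤ toLex u

namespace IsLexMin

lemma eq_of_linearCombination_eq (hu : IsLexMin v s u) (hw : IsLexMin v s w)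
    (h : linearCombination 𝕜 v u = linearCombination 𝕜 v w) : u = w :=
  toLex.injective <| le_antisymm (hu.le w (h ▸ hw.mem_conicWeights))
    (hw.le u (h ▸ hu.mem_conicWeights))

variable [IsStrictOrderedRing 𝕜]

lemma toLex_nonpos_of_smul_le {c : 𝕜} (hw : IsLexMin v s w) (hd : d ∈ supported 𝕜 𝕜 s)
    (hd_zero : linearCombination 𝕜 v d = 0) (hc : 0 < c) (hle : c • d ≤ w) : toLex d ≤ 0 := by
  have hw_le : toLex w ≤ toLex w - c • toLex d :=
    hw.le _ (sub_smul_mem_conicWeights hw.mem_conicWeights hd hd_zero hle)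
  have hcd : c • toLex d ≤ c • 0 := by rwa [smul_zero, ← le_sub_self_iff]
  exact le_of_smul_le_smul_left hcd hc

lemma of_mem_supported_support (hw : IsLexMin v s w) (hu : 0 ≤ u)
    (huw : u ∈ supported 𝕜 𝕜 (w.support : Set ι)) : IsLexMin v s u := by
  have hus : u ∈ supported 𝕜 𝕜 s := supported_mono hw.mem_conicWeights.2.1 huw
  refine ⟨⟨hu, hus, rfl⟩, fun u' ⟨hu', hu's, hu'_eq⟩ ↦ ?_⟩
  obtain ⟨c, hc, hle⟩ := exists_pos_smul_le hw.mem_conicWeights.1 huw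
  have hle' : c • (u - u') ≤ w :=
    (smul_le_smul_of_nonneg_left (sub_le_self u hu') hc.le).trans hle
  have hsub : toLex (u - u') ≤ 0 :=
    hw.toLex_nonpos_of_smul_le (sub_mem hus hu's) (by rw [map_sub, hu'_eq, sub_self]) hc hle'
  exact sub_nonpos.1 hsub

lemma linearIndepOn_support (hw : IsLexMin v s w) : LinearIndepOn 𝕜 v (w.support : Set ι) := by
  have toLex_nonpos {d : ι →₀ 𝕜} (hd : d ∈ supported 𝕜 𝕜 (w.support : Set ι))
      (hd_zero : linearCombination 𝕜 v d = 0) : toLex d ≤ 0 := by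
    obtain ⟨c, hc, hle⟩ := exists_pos_smul_le hw.mem_conicWeights.1 hd
    exact hw.toLex_nonpos_of_smul_le (supported_mono hw.mem_conicWeights.2.1 hd) hd_zero hc hle
  refine linearIndepOn_iff.2 fun d hd hd_zero ↦ ?_
  have toLex_neg_nonpos : toLex (-d) ≤ 0 :=
    toLex_nonpos (neg_mem hd) (by rw [map_neg, hd_zero, neg_zero])
  exact toLex.injective (le_antisymm (toLex_nonpos hd hd_zero) (neg_nonpos.1 toLex_neg_nonpos))

end IsLexMin

variable [IsStrictOrderedRing 𝕜]

lemma exists_toLex_pos_of_not_linearIndepOn {t : Set ι} (ht : ¬ LinearIndepOn 𝕜 v t) :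
    ∃ d ∈ supported 𝕜 𝕜 t, linearCombination 𝕜 v d = 0 ∧ 0 < toLex d := by
  simp only [linearIndepOn_iff, not_forall] at ht
  obtain ⟨d, hd, hd_zero, hne⟩ := ht
  rcases lt_or_gt_of_ne (toLex.injective.ne hne) with hneg | hpos
  · exact ⟨-d, neg_mem hd, by rw [map_neg, hd_zero, neg_zero], neg_pos.2 hneg⟩
  · exact ⟨d, hd, hd_zero, hpos⟩

lemma exists_toLex_le_support_ssubset (hw : w ∈ conicWeights 𝕜 v s p)
    (hdep : ¬ LinearIndepOn 𝕜 v (w.support : Set ι)) :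
    ∃ u ∈ conicWeights 𝕜 v s p, toLex u ≤ toLex w ∧ u.support ⊂ w.support := by
  obtain ⟨d, hd, hd_zero, d_pos⟩ := exists_toLex_pos_of_not_linearIndepOn hdep
  obtain ⟨c, hc, hle, i, hi, hci⟩ :=
    exists_pos_smul_le_and_mul_eq hw.1 hd (exists_pos_of_toLex_pos d_pos)
  have hsub : w - c • d ∈ supported 𝕜 𝕜 (w.support : Set ι) :=
    sub_mem (Finsupp.mem_supported_support 𝕜 w) (Submodule.smul_mem _ c hd)
  have hi_notMem : i ∉ (w - c • d).support := by simp [hci]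
  exact ⟨w - c • d, sub_smul_mem_conicWeights hw (supported_mono hw.2.1 hd) hd_zero hle,
    sub_le_self _ (smul_pos hc d_pos).le,
    Finset.ssubset_iff_of_subset (Finset.coe_subset.1 hsub) |>.2 ⟨i, hi, hi_notMem⟩⟩

lemma exists_toLex_le_linearIndepOn_support (hw : w ∈ conicWeights 𝕜 v s p) :
    ∃ u ∈ conicWeights 𝕜 v s p, toLex u ≤ toLex w ∧ LinearIndepOn 𝕜 v (u.support : Set ι) := by
  induction hsupp : w.support using Finset.strongInduction generalizing w with
  | H t ih =>
    subst hsupp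
    by_cases hindep : LinearIndepOn 𝕜 v (w.support : Set ι)
    · exact ⟨w, hw, le_rfl, hindep⟩
    · obtain ⟨w', hw', hw'_le, hlt⟩ := exists_toLex_le_support_ssubset hw hindep
      obtain ⟨u, hu, hu_le, hu_indep⟩ := ih _ hlt hw' rfl
      exact ⟨u, hu, hu_le.trans hw'_le, hu_indep⟩

lemma exists_mem_conicWeights_isLexMin {s : Finset ι} (hne : (conicWeights 𝕜 v s p).Nonempty) :
    ∃ w ∈ conicWeights 𝕜 v s p, IsLexMin v s w := by
  obtain ⟨w₀, hw₀⟩ := hne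
  obtain ⟨u₀, hu₀, -, hu₀_indep⟩ := exists_toLex_le_linearIndepOn_support hw₀
  obtain ⟨w, ⟨hw, -⟩, hmin⟩ := Set.exists_min_image _ toLex
    finite_conicWeights_linearIndepOn_support ⟨u₀, hu₀, hu₀_indep⟩
  refine ⟨w, hw, hw.2.2 ▸ hw, fun u hu ↦ ?_⟩
  obtain ⟨u', hu', hu'_le, hu'_indep⟩ := exists_toLex_le_linearIndepOn_support (hw.2.2 ▸ hu)
  exact (hmin u' ⟨hu', hu'_indep⟩).trans hu'_le

end IsLexMin

section Triangulation

variable [AddCommGroup E] [Module 𝕜 E] [LinearOrder E]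

variable (𝕜) in
/-- The supports, possibly empty, of the lexicographically smallest weights on the points of `s`. -/
def lexFaces (s : Set E) : Set (Finset E) :=
  Finsupp.support '' {w : E →₀ 𝕜 | IsLexMin (homogenize 𝕜) s w}

lemma coe_subset_of_mem_lexFaces {s : Set E} {t : Finset E} (ht : t ∈ lexFaces 𝕜 s) :
    (t : Set E) ⊆ s := by
  obtain ⟨w, hw, rfl⟩ := ht
  exact hw.mem_conicWeights.2.1

variable [IsStrictOrderedRing 𝕜] {s : Set E}

lemma affineIndependent_of_mem_lexFaces {t : Finset E} (ht : t ∈ lexFaces 𝕜 s) :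
    AffineIndependent 𝕜 ((↑) : t → E) := by
  obtain ⟨w, hw, rfl⟩ := ht
  exact linearIndependent_homogenize_iff.1 hw.linearIndepOn_support.linearIndependent

lemma isLowerSet_lexFaces : IsLowerSet (lexFaces 𝕜 s) := by
  classical
  rintro _ t hts ⟨w, hw, rfl⟩
  have hsupp : (w.filter (· ∈ t)).support = t := by
    rw [Finsupp.support_filter, Finset.filter_mem_eq_inter, Finset.inter_eq_right.2 hts]
  have hnonneg : 0 ≤ w.filter (· ∈ t) := fun x ↦ by
    rw [Finsupp.filter_apply]
    split_ifs
    exacts [hw.mem_conicWeights.1 x, le_rfl]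
  refine ⟨w.filter (· ∈ t), hw.of_mem_supported_support hnonneg ?_, hsupp⟩
  exact Finset.coe_subset.2 (hsupp.trans_le hts)

lemma exists_isLexMin_of_mem_convexHull {t : Finset E} {x : E} (ht : t ∈ lexFaces 𝕜 s)
    (hx : x ∈ convexHull 𝕜 (t : Set E)) :
    ∃ w ∈ conicWeights 𝕜 (homogenize 𝕜) (t : Set E) (1, x), IsLexMin (homogenize 𝕜) s w := by
  obtain ⟨w, hw⟩ := mem_convexHull_iff_nonempty_conicWeights.1 hx
  obtain ⟨w', hw', rfl⟩ := ht
  exact ⟨w, hw, hw'.of_mem_supported_support hw.1 hw.2.1⟩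

lemma convexHull_inter_subset_of_mem_lexFaces {t₁ t₂ : Finset E} (ht₁ : t₁ ∈ lexFaces 𝕜 s)
    (ht₂ : t₂ ∈ lexFaces 𝕜 s) :
    convexHull 𝕜 (t₁ : Set E) ∩ convexHull 𝕜 (t₂ : Set E) ⊆ convexHull 𝕜 (t₁ ∩ t₂ : Set E) := by
  classical
  rintro x ⟨hx₁, hx₂⟩
  obtain ⟨w₁, hw₁, hw₁_min⟩ := exists_isLexMin_of_mem_convexHull ht₁ hx₁
  obtain ⟨w₂, hw₂, hw₂_min⟩ := exists_isLexMin_of_mem_convexHull ht₂ hx₂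
  obtain rfl : w₁ = w₂ :=
    hw₁_min.eq_of_linearCombination_eq hw₂_min (hw₁.2.2.trans hw₂.2.2.symm)
  have hsupp : w₁ ∈ supported 𝕜 𝕜 ((t₁ ∩ t₂ : Finset E) : Set E) := by
    rw [Finset.coe_inter]
    exact subset_inter hw₁.2.1 hw₂.2.1
  rw [← Finset.coe_inter]
  exact mem_convexHull_iff_nonempty_conicWeights.2 ⟨w₁, hw₁.1, hsupp, hw₁.2.2⟩

variable (𝕜) in
/-- The lexicographic triangulation of the convex hull of `s` (for finite `s`), without vertices
outside `s`. -/
def lexTriangulation (s : Set E) : SimplicialComplex 𝕜 E :=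
  .ofErase (lexFaces 𝕜 s) (fun _ ↦ affineIndependent_of_mem_lexFaces) isLowerSet_lexFaces
    fun _ ht₁ _ ht₂ ↦ convexHull_inter_subset_of_mem_lexFaces ht₁ ht₂

lemma lexTriangulation_faces_finite (s : Finset E) :
    (lexTriangulation 𝕜 (s : Set E)).faces.Finite :=
  s.powerset.finite_toSet.subset fun _ ht ↦
    Finset.mem_powerset.2 (Finset.coe_subset.1 (coe_subset_of_mem_lexFaces ht.1))

lemma lexTriangulation_space (s : Finset E) :
    (lexTriangulation 𝕜 (s : Set E)).space = convexHull 𝕜 (s : Set E) := by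
  ext x
  rw [SimplicialComplex.mem_space_iff]
  constructor
  · rintro ⟨t, ht, hx⟩
    exact convexHull_mono (coe_subset_of_mem_lexFaces ht.1) hx
  · intro hx
    obtain ⟨w, hw, hw_min⟩ :=
      exists_mem_conicWeights_isLexMin (mem_convexHull_iff_nonempty_conicWeights.1 hx)
    have hx_support : x ∈ convexHull 𝕜 (w.support : Set E) :=
      mem_convexHull_iff_nonempty_conicWeights.2
        ⟨w, hw.1, Finsupp.mem_supported_support 𝕜 w, hw.2.2⟩
    have support_nonempty : w.support.Nonempty :=
      Finset.coe_nonempty.1 (convexHull_nonempty_iff.1 ⟨x, hx_support⟩)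
    exact ⟨w.support, ⟨⟨w, hw_min, rfl⟩, support_nonempty.ne_empty⟩, hx_support⟩

end Triangulation

end LexTriangulation

theorem statement5_general {𝕜 E : Type*} [Field 𝕜] [LinearOrder 𝕜] [IsStrictOrderedRing 𝕜]
    [AddCommGroup E] [Module 𝕜 E] (S : Finset E) :
    ∃ K : SimplicialComplex 𝕜 E, K.faces.Finite ∧ K.space = convexHull 𝕜 (S : Set E) := by
  obtain ⟨_, -⟩ := exists_wellFoundedLT E
  exact ⟨LexTriangulation.lexTriangulation 𝕜 (S : Set E),
    LexTriangulation.lexTriangulation_faces_finite S, LexTriangulation.lexTriangulation_space S⟩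

/-- Every compact convex polytope in `ℝ^N` — the convex hull of a finite set — is the space of
some finite simplicial complex. -/
theorem statement5 (N : ℕ) (S : Finset (EuclideanSpace ℝ (Fin N))) :
    ∃ K : SimplicialComplex ℝ (EuclideanSpace ℝ (Fin N)),
      K.faces.Finite ∧ K.space = convexHull ℝ (S : Set (EuclideanSpace ℝ (Fin N))) :=
  statement5_general S
end

section
/- Let P, P' ⊂ ℝ^N be two compact convex polytopes (convex hulls of finite sets) whose intersection P ∩ P' is an exposed face of P and an exposed face of P' (possibly empty). Then there exist finite simplicial complexes T and T' in ℝ^N with space T = P and space T' = P' such that the union of the two collections of simplices is again a simplicial complex; equivalently, the intersection of any simplex of T with any simplex of T' is either empty or a common face of both. -/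
open Set Geometry

/-!
Fix a linear order on the ambient space. Among all ways of writing a point of `conv V`, `V` finite,
as a convex combination of `V`, exactly one has a lexicographically greatest weight function. The
sets `A ⊆ V` all of whose convex combinations are lexicographically greatest form a triangulation of
`conv V`: two simplices containing a point `x` both carry the greatest weights of `x`, so `x` lies
in the simplex spanned by their common vertices.

Now let `V = S ∪ S'` and triangulate `P` and `P'` in this way with vertices in `V ∩ P` and `V ∩ P'`.
Since `P ∩ P'` is extreme in both polytopes, a point of `P ∩ P'` is a convex combination only of
points of `V ∩ P ∩ P'`, so its greatest weights are the same with respect to `P` and to `P'`. Hence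
the argument above also applies to a simplex of `P` and a simplex of `P'`.
-/

lemma exists_smul_le_and_mul_eq {ι 𝕜 : Type*} [Field 𝕜] [LinearOrder 𝕜]
    [IsStrictOrderedRing 𝕜] {v w : ι →₀ 𝕜} (hw : 0 ≤ w) (hv : ∃ i, 0 < v i) :
    ∃ t, 0 ≤ t ∧ t • v ≤ w ∧ ∃ i, 0 < v i ∧ t * v i = w i := by
  have hpos : (v.support.filter (0 < v ·)).Nonempty :=
    hv.imp fun i hi ↦ by simp [hi, hi.ne']
  obtain ⟨i, hi, hmin⟩ := Finset.exists_min_image _ (fun i ↦ w i / v i) hpos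
  have hvi : 0 < v i := (Finset.mem_filter.1 hi).2
  have ht : 0 ≤ w i / v i := div_nonneg (hw i) hvi.le
  refine ⟨w i / v i, ht, fun j ↦ ?_, i, hvi, div_mul_cancel₀ _ hvi.ne'⟩
  rcases le_or_gt (v j) 0 with hvj | hvj
  · exact (mul_nonpos_of_nonneg_of_nonpos ht hvj).trans (hw j)
  · exact (le_div_iff₀ hvj).1 (hmin j (by simp [hvj, hvj.ne']))

lemma toLex_lt_toLex_add_smul_sub {ι 𝕜 : Type*} [LinearOrder ι] [Ring 𝕜] [PartialOrder 𝕜]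
    [IsStrictOrderedRing 𝕜] {v v' : ι →₀ 𝕜} (h : toLex v < toLex v') (w : ι →₀ 𝕜) {t : 𝕜}
    (ht : 0 < t) : toLex w < toLex (w + t • (v' - v)) := by
  obtain ⟨i, heq, hlt⟩ := Finsupp.Lex.lt_iff.1 h
  refine Finsupp.Lex.lt_iff.2 ⟨i, fun j hj ↦ ?_, ?_⟩
  · have : v j = v' j := heq j hj
    simp [this]
  · have : v i < v' i := hlt
    simpa using mul_pos ht (sub_pos.2 this)

section OrderedRing

variable {𝕜 E : Type*} [Ring 𝕜] [PartialOrder 𝕜] [AddCommGroup E] [Module 𝕜 E]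

lemma convexHull_inter_convexHull_of_subset {S V : Set E} (hSV : S ⊆ V) :
    convexHull 𝕜 (V ∩ convexHull 𝕜 S) = convexHull 𝕜 S :=
  (convexHull_min inter_subset_right (convex_convexHull 𝕜 S)).antisymm
    (convexHull_mono (subset_inter hSV (subset_convexHull 𝕜 S)))

lemma exists_faces_eq_union {T T' : SimplicialComplex 𝕜 E}
    (h : ∀ A ∈ T.faces, ∀ B ∈ T'.faces,
      convexHull 𝕜 (A : Set E) ∩ convexHull 𝕜 (B : Set E) ⊆ convexHull 𝕜 (A ∩ B : Set E)) :
    ∃ U : SimplicialComplex 𝕜 E, U.faces = T.faces ∪ T'.faces := by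
  refine ⟨{ faces := T.faces ∪ T'.faces
            isRelLowerSet_faces := T.isRelLowerSet_faces.union T'.isRelLowerSet_faces
            indep := fun hA ↦ hA.elim T.indep T'.indep
            inter_subset_convexHull := ?_ }, rfl⟩
  rintro A B (hA | hA) (hB | hB)
  · exact T.inter_subset_convexHull hA hB
  · exact h A hA B hB
  · rw [inter_comm, inter_comm (A : Set E)]
    exact h B hB A hA
  · exact T'.inter_subset_convexHull hA hB

/-- `w` is a system of weights writing `x` as a convex combination of points of `V`. Weights are
finitely supported functions on the whole space, so that weights on different sets `V` can be
compared. -/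
structure IsConvexRepr (V : Set E) (x : E) (w : E →₀ 𝕜) : Prop where
  mem_supported : w ∈ Finsupp.supported 𝕜 𝕜 V
  nonneg : 0 ≤ w
  total : Finsupp.linearCombination 𝕜 (fun _ ↦ (1 : 𝕜)) w = 1
  linearCombination_eq : Finsupp.linearCombination 𝕜 id w = x

namespace IsConvexRepr

variable {V W : Set E} {x y z : E} {v v' w : E →₀ 𝕜}

lemma mono (hw : IsConvexRepr V x w) (hVW : V ⊆ W) : IsConvexRepr W x w :=
  { hw with mem_supported := Finsupp.supported_mono hVW hw.mem_supported }

lemma inter (hV : IsConvexRepr V x w) (hW : IsConvexRepr W x w) : IsConvexRepr (V ∩ W) x w :=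
  { hV with mem_supported := subset_inter hV.mem_supported hW.mem_supported }

lemma add_smul_sub {t : 𝕜} (hw : IsConvexRepr V x w) (hv : IsConvexRepr V y v)
    (hv' : IsConvexRepr V z v') (hpos : 0 ≤ w + t • (v' - v)) :
    IsConvexRepr V (x + t • (z - y)) (w + t • (v' - v)) where
  mem_supported := add_mem hw.mem_supported
    (Submodule.smul_mem _ _ (sub_mem hv'.mem_supported hv.mem_supported))
  nonneg := hpos
  total := by simp only [map_add, map_smul, map_sub, hw.total, hv.total, hv'.total, sub_self,
    smul_zero, add_zero]
  linearCombination_eq := by simp only [map_add, map_smul, map_sub, hw.linearCombination_eq,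
    hv.linearCombination_eq, hv'.linearCombination_eq]

end IsConvexRepr

variable [LinearOrder E]

variable (𝕜) in
/-- `A ⊆ V` spans a simplex of the lexicographic triangulation of `conv V`: weights supported on `A`
are lexicographically greatest among all weights on `V` representing the same point. -/
structure IsLexFace (V A : Set E) : Prop where
  subset : A ⊆ V
  toLex_le : ∀ ⦃x : E⦄ ⦃w w' : E →₀ 𝕜⦄,
    IsConvexRepr A x w → IsConvexRepr V x w' → toLex w' ≤ toLex w

lemma IsLexFace.mono {V A B : Set E} (hA : IsLexFace 𝕜 V A) (hBA : B ⊆ A) : IsLexFace 𝕜 V B where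
  subset := hBA.trans hA.subset
  toLex_le _ _ _ hw hw' := hA.toLex_le (hw.mono hBA) hw'

end OrderedRing

section OrderedField

variable {𝕜 E : Type*} [Field 𝕜] [LinearOrder 𝕜] [IsStrictOrderedRing 𝕜]
  [AddCommGroup E] [Module 𝕜 E]

namespace IsConvexRepr

variable {V : Set E} {x : E} {w : E →₀ 𝕜}

lemma single (hx : x ∈ V) : IsConvexRepr V x (Finsupp.single x (1 : 𝕜)) where
  mem_supported := Finsupp.single_mem_supported 𝕜 1 hx
  nonneg := Finsupp.single_nonneg.2 zero_le_one
  total := by simp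
  linearCombination_eq := by simp

lemma exists_pos (hw : IsConvexRepr V x w) : ∃ s, 0 < w s := by
  by_contra! h
  have hw0 : w = 0 := Finsupp.ext fun s ↦ (h s).antisymm (hw.nonneg s)
  simpa [hw0] using hw.total

lemma mem_convexHull (hw : IsConvexRepr V x w) : x ∈ convexHull 𝕜 V := by
  have htotal : ∑ s ∈ w.support, w s = 1 := by
    simpa [Finsupp.linearCombination_apply, Finsupp.sum] using hw.total
  rw [← hw.linearCombination_eq]
  exact (convex_convexHull 𝕜 V).sum_mem (fun s _ ↦ hw.nonneg s) htotal
    fun s hs ↦ subset_convexHull 𝕜 V (hw.mem_supported hs)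

end IsConvexRepr

lemma mem_convexHull_iff_exists_isConvexRepr {V : Set E} {x : E} :
    x ∈ convexHull 𝕜 V ↔ ∃ w : E →₀ 𝕜, IsConvexRepr V x w := by
  refine ⟨fun hx ↦ ?_, fun ⟨_, hw⟩ ↦ hw.mem_convexHull⟩
  refine convexHull_min (t := {x | ∃ w : E →₀ 𝕜, IsConvexRepr V x w})
    (fun s hs ↦ ⟨_, .single hs⟩) ?_ hx
  rw [convex_iff_add_mem]
  rintro y ⟨v, hv⟩ z ⟨v', hv'⟩ a b ha hb hab
  obtain rfl : a = 1 - b := eq_sub_of_add_eq hab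
  have hmix : v + b • (v' - v) = (1 - b) • v + b • v' := by module
  have hpos : 0 ≤ v + b • (v' - v) :=
    hmix ▸ add_nonneg (smul_nonneg ha hv.nonneg) (smul_nonneg hb hv'.nonneg)
  have hpoint : y + b • (z - y) = (1 - b) • y + b • z := by module
  exact ⟨_, hpoint ▸ hv.add_smul_sub hv hv' hpos⟩

-- `s` is the left end of an open segment through `x` whose right end is `x + w s • (x - s)`.
lemma IsConvexRepr.inter_of_isExtreme {V P F : Set E} {x : E} {w : E →₀ 𝕜} (hP : Convex 𝕜 P)
    (hVP : V ⊆ P) (hF : IsExtreme 𝕜 P F) (hx : x ∈ F) (hw : IsConvexRepr V x w) :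
    IsConvexRepr (V ∩ F) x w := by
  refine hw.inter { hw with mem_supported := fun s hs ↦ ?_ }
  have hsV : s ∈ V := hw.mem_supported hs
  have hws : 0 < w s := (hw.nonneg s).lt_of_ne' (Finsupp.mem_support_iff.1 hs)
  have hpos : 0 ≤ w + w s • (w - Finsupp.single s 1) := fun r ↦ by
    have hwr : 0 ≤ w r := hw.nonneg r
    rcases eq_or_ne s r with rfl | hsr
    · simpa [mul_sub] using mul_nonneg hwr hwr
    · simpa [hsr] using add_nonneg hwr (mul_nonneg hws.le hwr)
  have hyP : x + w s • (x - s) ∈ P :=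
    convexHull_min hVP hP (hw.add_smul_sub (.single hsV) hw hpos).mem_convexHull
  refine hF.left_mem_of_mem_openSegment (hVP hsV) hyP hx
    ⟨w s / (1 + w s), 1 / (1 + w s), by positivity, by positivity, by field_simp; ring, ?_⟩
  match_scalars <;> field_simp
  ring

section Lex

variable [LinearOrder E]

-- Adding a multiple of `v' - v` increases `w` lexicographically until one of the weights vanishes.
lemma IsConvexRepr.exists_erase_toLex_le {V : Finset E} {x : E} {v v' w : E →₀ 𝕜}
    (hv : IsConvexRepr V x v) (hv' : IsConvexRepr V x v') (hlt : toLex v < toLex v')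
    (hw : IsConvexRepr V x w) :
    ∃ s ∈ V, ∃ w' : E →₀ 𝕜, IsConvexRepr (V.erase s) x w' ∧ toLex w ≤ toLex w' := by
  have hsum : ∑ s ∈ (v - v').support, (v - v') s = 0 := by
    simpa [Finsupp.linearCombination_apply, Finsupp.sum, hv.total, hv'.total] using
      map_sub (Finsupp.linearCombination 𝕜 fun _ ↦ (1 : 𝕜)) v v'
  have hne : v - v' ≠ 0 := sub_ne_zero.2 fun h ↦ hlt.ne (congrArg toLex h)
  obtain ⟨r, -, hr⟩ := Finset.exists_pos_of_sum_zero_of_exists_nonzero _ hsum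
    ((Finsupp.support_nonempty_iff.2 hne).imp fun s hs ↦ ⟨hs, Finsupp.mem_support_iff.1 hs⟩)
  obtain ⟨t, ht, hle, s, hs, hzero⟩ := exists_smul_le_and_mul_eq hw.nonneg ⟨r, hr⟩
  have hpush : w + t • (v' - v) = w - t • (v - v') := by module
  have hw' := hw.add_smul_sub hv hv' (hpush ▸ sub_nonneg.2 hle)
  rw [sub_self, smul_zero, add_zero] at hw'
  have hsV : s ∈ V := (sub_mem hv.mem_supported hv'.mem_supported :
    v - v' ∈ Finsupp.supported 𝕜 𝕜 (V : Set E)) (Finsupp.mem_support_iff.2 hs.ne')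
  refine ⟨s, hsV, _, { hw' with mem_supported := fun q hq ↦ ?_ }, ?_⟩
  · refine Finset.mem_coe.2 (Finset.mem_erase.2 ⟨?_, hw'.mem_supported hq⟩)
    rintro rfl
    refine Finsupp.mem_support_iff.1 hq ?_
    rw [hpush, Finsupp.sub_apply, Finsupp.smul_apply, smul_eq_mul, hzero, sub_self]
  · rcases ht.eq_or_lt with rfl | ht
    · simp
    · exact (toLex_lt_toLex_add_smul_sub hlt w ht).le

lemma exists_forall_isConvexRepr_toLex_le (V : Finset E) (x : E) :
    ∃ m : E →₀ 𝕜, ∀ w, IsConvexRepr V x w → IsConvexRepr V x m ∧ toLex w ≤ toLex m := by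
  induction V using Finset.strongInduction with
  | H V ih =>
    by_cases hlt : ∃ v v' : E →₀ 𝕜, IsConvexRepr V x v ∧ IsConvexRepr V x v' ∧ toLex v < toLex v'
    swap
    · by_cases hne : ∃ m : E →₀ 𝕜, IsConvexRepr V x m
      · obtain ⟨m, hm⟩ := hne
        exact ⟨m, fun w hw ↦ ⟨hm, le_of_not_gt fun hmw ↦ hlt ⟨m, w, hm, hw, hmw⟩⟩⟩
      · exact ⟨0, fun w hw ↦ (hne ⟨w, hw⟩).elim⟩
    obtain ⟨v, v', hv, hv', hlt⟩ := hlt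
    choose! m hm using fun s (hs : s ∈ V) ↦ ih _ (Finset.erase_ssubset hs)
    have hdom : ∀ w, IsConvexRepr V x w →
        ∃ s ∈ V, IsConvexRepr V x (m s) ∧ toLex w ≤ toLex (m s) := fun w hw ↦ by
      obtain ⟨s, hs, w', hw', hle⟩ := hv.exists_erase_toLex_le hv' hlt hw
      obtain ⟨hms, hle'⟩ := hm s hs w' hw'
      exact ⟨s, hs, hms.mono (by simp), hle.trans hle'⟩
    classical
    obtain ⟨s₀, hs₀, hmax⟩ := Finset.exists_max_image
      (V.filter fun s ↦ IsConvexRepr V x (m s)) (fun s ↦ toLex (m s))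
      ((hdom v hv).imp fun s hs ↦ Finset.mem_filter.2 ⟨hs.1, hs.2.1⟩)
    refine ⟨m s₀, fun w hw ↦ ⟨(Finset.mem_filter.1 hs₀).2, ?_⟩⟩
    obtain ⟨s, hs, hms, hle⟩ := hdom w hw
    exact hle.trans (hmax s (Finset.mem_filter.2 ⟨hs, hms⟩))

namespace IsLexFace

variable {V V' A B : Set E}

lemma convexHull_inter_subset
    (hVV' : ∀ x ∈ convexHull 𝕜 V ∩ convexHull 𝕜 V', ∀ w : E →₀ 𝕜,
      IsConvexRepr V x w ↔ IsConvexRepr V' x w)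
    (hA : IsLexFace 𝕜 V A) (hB : IsLexFace 𝕜 V' B) :
    convexHull 𝕜 A ∩ convexHull 𝕜 B ⊆ convexHull 𝕜 (A ∩ B) := by
  rintro x ⟨hxA, hxB⟩
  have hrepr := hVV' x ⟨convexHull_mono hA.subset hxA, convexHull_mono hB.subset hxB⟩
  obtain ⟨w, hw⟩ := mem_convexHull_iff_exists_isConvexRepr.1 hxA
  obtain ⟨v, hv⟩ := mem_convexHull_iff_exists_isConvexRepr.1 hxB
  have hvw : toLex v ≤ toLex w := hA.toLex_le hw ((hrepr v).2 (hv.mono hB.subset))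
  have hwv : toLex w ≤ toLex v := hB.toLex_le hv ((hrepr w).1 (hw.mono hA.subset))
  obtain rfl : w = v := toLex.injective (hwv.antisymm hvw)
  exact (hw.inter hv).mem_convexHull

-- A Radon partition of `A` would give two lexicographic faces whose hulls meet although they share
-- no vertex.
lemma affineIndependent (hA : IsLexFace 𝕜 V A) : AffineIndependent 𝕜 ((↑) : A → E) := by
  by_contra hdep
  obtain ⟨I, x, hx⟩ := Convex.radon_partition hdep
  have hface (J : Set A) : IsLexFace 𝕜 V ((↑) '' J) := hA.mono (Subtype.coe_image_subset A J)
  have hmem := convexHull_inter_subset (fun _ _ _ ↦ Iff.rfl) (hface I) (hface Iᶜ) hx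
  simp at hmem

end IsLexFace

-- If weights `v` on the support of `m` were beaten by `v'`, then `m + t • (v' - v)` would beat `m`.
lemma IsConvexRepr.isLexFace_support {V : Set E} {x : E} {m : E →₀ 𝕜} (hm : IsConvexRepr V x m)
    (hmax : ∀ w : E →₀ 𝕜, IsConvexRepr V x w → toLex w ≤ toLex m) :
    IsLexFace 𝕜 V m.support where
  subset := hm.mem_supported
  toLex_le y v v' hv hv' := by
    by_contra! hlt
    obtain ⟨t, ht, hle, s, hs, hts⟩ := exists_smul_le_and_mul_eq hm.nonneg hv.exists_pos
    have hms : m s ≠ 0 := Finsupp.mem_support_iff.1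
      (hv.mem_supported (Finsupp.mem_support_iff.2 hs.ne'))
    have ht : 0 < t := ht.lt_of_ne' fun h ↦ hms (by rw [← hts, h, zero_mul])
    have hpush : m + t • (v' - v) = (m - t • v) + t • v' := by module
    have hm' := hm.add_smul_sub (hv.mono hm.mem_supported) hv'
      (hpush ▸ add_nonneg (sub_nonneg.2 hle) (smul_nonneg ht.le hv'.nonneg))
    rw [sub_self, smul_zero, add_zero] at hm'
    exact (hmax _ hm').not_gt (toLex_lt_toLex_add_smul_sub hlt m ht)

lemma exists_isLexFace_mem_convexHull {V : Set E} (hV : V.Finite) {x : E}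
    (hx : x ∈ convexHull 𝕜 V) : ∃ A : Finset E, IsLexFace 𝕜 V A ∧ x ∈ convexHull 𝕜 (A : Set E) := by
  lift V to Finset E using hV
  obtain ⟨w, hw⟩ := mem_convexHull_iff_exists_isConvexRepr.1 hx
  obtain ⟨m, hm⟩ := exists_forall_isConvexRepr_toLex_le (𝕜 := 𝕜) V x
  have hmV : IsConvexRepr V x m := (hm w hw).1
  have hmA : IsConvexRepr m.support x m := { hmV with mem_supported := Subset.rfl }
  exact ⟨m.support, hmV.isLexFace_support fun v hv ↦ (hm v hv).2, hmA.mem_convexHull⟩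

variable (𝕜) in
/-- The simplicial complex of all lexicographic faces of `V`; for finite `V` it triangulates
`conv V`. It depends on the linear order chosen on `E`. -/
def lexTriangulation (V : Set E) : SimplicialComplex 𝕜 E where
  faces := {A | A.Nonempty ∧ IsLexFace 𝕜 V A}
  isRelLowerSet_faces := fun _ hA ↦
    ⟨hA.1, fun _ hBA hB ↦ ⟨hB, hA.2.mono (Finset.coe_subset.2 hBA)⟩⟩
  indep hA := hA.2.affineIndependent
  inter_subset_convexHull hA hB := hA.2.convexHull_inter_subset (fun _ _ _ ↦ Iff.rfl) hB.2

lemma finite_faces_lexTriangulation {V : Set E} (hV : V.Finite) :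
    (lexTriangulation 𝕜 V).faces.Finite :=
  hV.toFinset.powerset.finite_toSet.subset fun _ hA ↦
    Finset.mem_powerset.2 (hV.subset_toFinset.2 hA.2.subset)

lemma space_lexTriangulation {V : Set E} (hV : V.Finite) :
    (lexTriangulation 𝕜 V).space = convexHull 𝕜 V := by
  ext x
  rw [SimplicialComplex.mem_space_iff]
  refine ⟨fun ⟨A, hA, hxA⟩ ↦ convexHull_mono hA.2.subset hxA, fun hx ↦ ?_⟩
  obtain ⟨A, hA, hxA⟩ := exists_isLexFace_mem_convexHull hV hx
  exact ⟨A, ⟨Finset.coe_nonempty.1 (convexHull_nonempty_iff.1 ⟨x, hxA⟩), hA⟩, hxA⟩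

end Lex

lemma isConvexRepr_inter_iff_of_isExtreme {P P' : Set E} (hP : Convex 𝕜 P) (hP' : Convex 𝕜 P')
    (hPP' : IsExtreme 𝕜 P (P ∩ P')) (hP'P : IsExtreme 𝕜 P' (P ∩ P')) (V : Set E) {x : E}
    (hx : x ∈ P ∩ P') (w : E →₀ 𝕜) :
    IsConvexRepr (V ∩ P) x w ↔ IsConvexRepr (V ∩ P') x w :=
  ⟨fun hw ↦ (hw.inter_of_isExtreme hP inter_subset_right hPP' hx).mono
      fun _ hs ↦ ⟨hs.1.1, hs.2.2⟩,
    fun hw ↦ (hw.inter_of_isExtreme hP' inter_subset_right hP'P hx).mono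
      fun _ hs ↦ ⟨hs.1.1, hs.2.1⟩⟩

theorem statement6_general (S S' : Finset E)
    (hP : IsExtreme 𝕜 (convexHull 𝕜 (S : Set E))
      (convexHull 𝕜 (S : Set E) ∩ convexHull 𝕜 (S' : Set E)))
    (hP' : IsExtreme 𝕜 (convexHull 𝕜 (S' : Set E))
      (convexHull 𝕜 (S : Set E) ∩ convexHull 𝕜 (S' : Set E))) :
    ∃ T T' : SimplicialComplex 𝕜 E,
      T.faces.Finite ∧ T'.faces.Finite ∧
      T.space = convexHull 𝕜 (S : Set E) ∧ T'.space = convexHull 𝕜 (S' : Set E) ∧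
      ∃ U : SimplicialComplex 𝕜 E, U.faces = T.faces ∪ T'.faces := by
  let : LinearOrder E := IsWellOrder.linearOrder WellOrderingRel
  let V : Set E := S ∪ S'
  have hV : V.Finite := S.finite_toSet.union S'.finite_toSet
  have hull_S : convexHull 𝕜 (V ∩ convexHull 𝕜 S) = convexHull 𝕜 (S : Set E) :=
    convexHull_inter_convexHull_of_subset subset_union_left
  have hull_S' : convexHull 𝕜 (V ∩ convexHull 𝕜 S') = convexHull 𝕜 (S' : Set E) :=
    convexHull_inter_convexHull_of_subset subset_union_right
  refine ⟨lexTriangulation 𝕜 (V ∩ convexHull 𝕜 S), lexTriangulation 𝕜 (V ∩ convexHull 𝕜 S'),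
    finite_faces_lexTriangulation (hV.inter_of_left _),
    finite_faces_lexTriangulation (hV.inter_of_left _),
    (space_lexTriangulation (hV.inter_of_left _)).trans hull_S,
    (space_lexTriangulation (hV.inter_of_left _)).trans hull_S',
    exists_faces_eq_union fun A hA B hB ↦ hA.2.convexHull_inter_subset (fun x hx w ↦ ?_) hB.2⟩
  rw [hull_S, hull_S'] at hx
  exact isConvexRepr_inter_iff_of_isExtreme (convex_convexHull 𝕜 _) (convex_convexHull 𝕜 _)
    hP hP' V hx w

end OrderedField

/-- If two compact convex polytopes `P = conv S` and `P' = conv S'` in `ℝ^N` intersect in a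
common exposed face (possibly empty), then they admit finite triangulations `T`, `T'` whose
union is again a simplicial complex. -/
theorem statement6 (N : ℕ) (S S' : Finset (EuclideanSpace ℝ (Fin N)))
    (hP : IsExposed ℝ (convexHull ℝ (S : Set (EuclideanSpace ℝ (Fin N))))
      (convexHull ℝ (S : Set (EuclideanSpace ℝ (Fin N))) ∩
        convexHull ℝ (S' : Set (EuclideanSpace ℝ (Fin N)))))
    (hP' : IsExposed ℝ (convexHull ℝ (S' : Set (EuclideanSpace ℝ (Fin N))))
      (convexHull ℝ (S : Set (EuclideanSpace ℝ (Fin N))) ∩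
        convexHull ℝ (S' : Set (EuclideanSpace ℝ (Fin N))))) :
    ∃ T T' : SimplicialComplex ℝ (EuclideanSpace ℝ (Fin N)),
      T.faces.Finite ∧ T'.faces.Finite ∧
      T.space = convexHull ℝ (S : Set (EuclideanSpace ℝ (Fin N))) ∧
      T'.space = convexHull ℝ (S' : Set (EuclideanSpace ℝ (Fin N))) ∧
      ∃ U : SimplicialComplex ℝ (EuclideanSpace ℝ (Fin N)),
        U.faces = T.faces ∪ T'.faces :=
  statement6_general S S' hP.isExtreme hP'.isExtreme
end
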